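/- arXiv:2109.01357 — 4 statements merged into one kernel-verified Lean document; each statement's English description precedes it below -/
import Mathlib

section
/- Let G and H be binary structures. The following are equivalent: (1) for all distinct i, i' ∈ G there exist j, j' ∈ H such that {(i,j),(i',j')} is a partial homomorphism from G to H, and every partial homomorphism {(i,j),(i',j')} with i ≠ i' from G to H extends to a total homomorphism G → H; (2) the rainbow relation algebra B_{G,H} is completely representable. -/
/-! ## Binary structures -/

/-- A binary structure: a carrier set together with a family of binary relations
indexed by a signature `σ` consisting of binary predicate symbols. -/
structure BinStruct (σ : Type) : Type 1 where
  V : Type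
  rel : σ → V → V → Prop

variable {σ : Type}

/-- The partial map `{(i,j),(i',j')}` is a partial homomorphism from `G` to `H`:
for all distinct elements of the domain and every binary predicate, the predicate
is preserved. -/
def PartialHom2 (G H : BinStruct σ) (i i' : G.V) (j j' : H.V) : Prop :=
  ∀ b : σ, (G.rel b i i' → H.rel b j j') ∧ (G.rel b i' i → H.rel b j' j)

/-- `f` is a (total) homomorphism from `G` to `H`. -/
def IsHom (G H : BinStruct σ) (f : G.V → H.V) : Prop :=
  ∀ (b : σ) (u v : G.V), u ≠ v → G.rel b u v → H.rel b (f u) (f v)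

/-! ## The rainbow atom structure -/

/-- Atoms of the rainbow relation algebra `B_{G,H}`. -/
inductive RbAtom (α β : Type) : Type
  | id : RbAtom α β
  | black : RbAtom α β
  | white : RbAtom α β
  | yellow : RbAtom α β
  | green (i : α) : RbAtom α β
  | red (j j' : β) : RbAtom α β

namespace RbAtom

/-- Converse of an atom: all atoms are self-converse except `(red j j')⌣ = red j' j`. -/
def conv {α β : Type} : RbAtom α β → RbAtom α β
  | red j j' => red j' j
  | a => a

end RbAtom

/-- The generating forbidden triples (I)–(VI) of the rainbow algebra `B_{G,H}`. -/
inductive BaseForbidden (G H : BinStruct σ) :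
    RbAtom G.V H.V → RbAtom G.V H.V → RbAtom G.V H.V → Prop
  | ident (a b : RbAtom G.V H.V) : a ≠ b → BaseForbidden G H .id a b
  | ggg (i i' i'' : G.V) : BaseForbidden G H (.green i) (.green i') (.green i'')
  | ggw (i i' : G.V) : BaseForbidden G H (.green i) (.green i') .white
  | yyy : BaseForbidden G H .yellow .yellow .yellow
  | yyb : BaseForbidden G H .yellow .yellow .black
  | rrr (j₁ j₂ j₂' j₃' j₁s j₃s : H.V) : ¬(j₁ = j₁s ∧ j₂ = j₂' ∧ j₃' = j₃s) →
      BaseForbidden G H (.red j₁ j₂) (.red j₂' j₃') (.red j₁s j₃s)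
  | ggr (i i' : G.V) (j j' : H.V) : ¬(i ≠ i' ∧ PartialHom2 G H i i' j j') →
      BaseForbidden G H (.green i) (.green i') (.red j j')

/-- A triple of atoms is forbidden if it is a Peircean transform of one of the
generating forbidden triples. -/
def Forbidden (G H : BinStruct σ) (a b c : RbAtom G.V H.V) : Prop :=
  ∃ x y z : RbAtom G.V H.V, BaseForbidden G H x y z ∧
    ((a, b, c) = (x, y, z) ∨ (a, b, c) = (x.conv, z, y) ∨ (a, b, c) = (z, y.conv, x) ∨
     (a, b, c) = (y.conv, x.conv, z.conv) ∨ (a, b, c) = (y, z.conv, x.conv) ∨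
     (a, b, c) = (z.conv, x, y.conv))

/-! ## The rainbow relation algebra (complex algebra of the atom structure) -/

/-- Composition in the complex algebra: `c ≤ X ; Y` iff there are `a ∈ X`, `b ∈ Y`
such that the triple `(a, b, c)` is not forbidden. -/
def rbComp (G H : BinStruct σ) (X Y : Set (RbAtom G.V H.V)) : Set (RbAtom G.V H.V) :=
  {c | ∃ a ∈ X, ∃ b ∈ Y, ¬ Forbidden G H a b c}

/-- Converse in the complex algebra. -/
def rbConv {α β : Type} (X : Set (RbAtom α β)) : Set (RbAtom α β) :=
  {a | RbAtom.conv a ∈ X}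

/-- The rainbow relation algebra `B_{G,H}` is completely representable: there is an
isomorphism onto an algebra of binary relations on some base set (with union,
complement, relational composition, converse and the identity relation) carrying
all suprema to unions. -/
def CompletelyRepresentable (G H : BinStruct σ) : Prop :=
  ∃ (X : Type) (θ : Set (RbAtom G.V H.V) → Set (X × X)),
    Function.Injective θ ∧
    (∀ S : Set (Set (RbAtom G.V H.V)), θ (⋃₀ S) = ⋃₀ (θ '' S)) ∧
    (∀ A : Set (RbAtom G.V H.V), θ Aᶜ = θ Set.univ \ θ A) ∧
    (∀ A B : Set (RbAtom G.V H.V),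
        θ (rbComp G H A B) = {p : X × X | ∃ z : X, (p.1, z) ∈ θ A ∧ (z, p.2) ∈ θ B}) ∧
    (∀ A : Set (RbAtom G.V H.V), θ (rbConv A) = {p : X × X | (p.2, p.1) ∈ θ A}) ∧
    θ {RbAtom.id} = {p : X × X | p.1 = p.2}

/-! ## The colouring game -/

/-- The set of vertices coloured (according to the interpretation `g`) with exactly
the colours in a palette `π`. -/
def PaletteSet {V : Type} {c : ℕ} (g : Fin c → Set V) (π : Set (Fin c)) : Set V :=
  {x | ∀ t : Fin c, x ∈ g t ↔ t ∈ π}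

/-- The position `(g,h)` of the `c`-colour colouring game on `(G,H)` is an immediate
win for ∀: (C1) some palette is realised in exactly one of the two structures, or
(C2) some pair of palettes and binary predicate produce a nonempty intersection in
exactly one of the two structures. -/
def ColWin (G H : BinStruct σ) (c : ℕ)
    (g : Fin c → Set G.V) (h : Fin c → Set H.V) : Prop :=
  (∃ π : Set (Fin c), Xor' (PaletteSet g π = ∅) (PaletteSet h π = ∅)) ∨
  (∃ (π π' : Set (Fin c)) (b : σ),
      Xor' ((PaletteSet g π ×ˢ PaletteSet g π') ∩ {q | G.rel b q.1 q.2} = ∅)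
           ((PaletteSet h π ×ˢ PaletteSet h π') ∩ {q | H.rel b q.1 q.2} = ∅))

/-- `∃` has a winning strategy in the infinitely long `c`-colour colouring game
`G^c_ω(G,H)` starting from the position `(g,h)`: there is an invariant family of safe
positions containing `(g,h)`, avoiding wins for `∀`, such that every move of `∀`
(a colour together with a set of vertices of either structure) has a response by `∃`
(a set of vertices of the other structure) staying in the family. -/
def ExSurvives (G H : BinStruct σ) (c : ℕ)
    (g : Fin c → Set G.V) (h : Fin c → Set H.V) : Prop :=
  ∃ Inv : (Fin c → Set G.V) → (Fin c → Set H.V) → Prop,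
    Inv g h ∧
    (∀ g' h', Inv g' h' → ¬ ColWin G H c g' h') ∧
    (∀ g' h', Inv g' h' → ∀ (t : Fin c) (S : Set G.V), ∃ T : Set H.V,
        Inv (Function.update g' t S) (Function.update h' t T)) ∧
    (∀ g' h', Inv g' h' → ∀ (t : Fin c) (T : Set H.V), ∃ S : Set G.V,
        Inv (Function.update g' t S) (Function.update h' t T))

/-- `∀` can force a win in the colouring game from the position `(g,h)`:
either the position is already a win for him, or he has a move such that
every response of `∃` leads to a position from which he can force a win. -/
inductive AllForcesWin (G H : BinStruct σ) (c : ℕ) :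
    (Fin c → Set G.V) → (Fin c → Set H.V) → Prop
  | now (g h) : ColWin G H c g h → AllForcesWin G H c g h
  | moveG (g h) (t : Fin c) (S : Set G.V) :
      (∀ T : Set H.V,
        AllForcesWin G H c (Function.update g t S) (Function.update h t T)) →
      AllForcesWin G H c g h
  | moveH (g h) (t : Fin c) (T : Set H.V) :
      (∀ S : Set G.V,
        AllForcesWin G H c (Function.update g t S) (Function.update h t T)) →
      AllForcesWin G H c g h

/-! ## Relation algebras, terms and formulas -/

/-- A relation algebra (Tarski's axioms): a Boolean algebra with an associative,
additive composition `;` with two-sided identity `1'`, and an additive involutive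
converse satisfying the Peircean/Tarski axioms. -/
class RelationAlgebra (A : Type) extends BooleanAlgebra A where
  comp : A → A → A
  conv : A → A
  one' : A
  comp_assoc : ∀ x y z : A, comp (comp x y) z = comp x (comp y z)
  comp_one' : ∀ x : A, comp x one' = x
  one'_comp : ∀ x : A, comp one' x = x
  sup_comp : ∀ x y z : A, comp (x ⊔ y) z = comp x z ⊔ comp y z
  comp_sup : ∀ x y z : A, comp x (y ⊔ z) = comp x y ⊔ comp x z
  conv_conv : ∀ x : A, conv (conv x) = x
  conv_sup : ∀ x y : A, conv (x ⊔ y) = conv x ⊔ conv y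
  conv_comp : ∀ x y : A, conv (comp x y) = comp (conv y) (conv x)
  tarski : ∀ x y : A, comp (conv x) (comp x y)ᶜ ⊓ y = ⊥

/-- A relation algebra is representable (a member of RRA) if it is isomorphic to a
subalgebra of an algebra of binary relations on some base set, with union,
complement, relational composition, converse and the identity relation. -/
def Representable (A : Type) [RelationAlgebra A] : Prop :=
  ∃ (X : Type) (θ : A → Set (X × X)),
    Function.Injective θ ∧
    (∀ a b : A, θ (a ⊔ b) = θ a ∪ θ b) ∧
    (∀ a : A, θ aᶜ = θ ⊤ \ θ a) ∧
    (∀ a b : A, θ (RelationAlgebra.comp a b) =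
        {p : X × X | ∃ z : X, (p.1, z) ∈ θ a ∧ (z, p.2) ∈ θ b}) ∧
    (∀ a : A, θ (RelationAlgebra.conv a) = {p : X × X | (p.2, p.1) ∈ θ a}) ∧
    θ RelationAlgebra.one' = {p : X × X | p.1 = p.2}

/-- A signature of relation-algebra operations on a carrier `A` (used to interpret
relation-algebra terms both in abstract relation algebras and in the concrete
rainbow complex algebras). -/
structure RAOps (A : Type) where
  bot : A
  top : A
  one' : A
  sup : A → A → A
  inf : A → A → A
  compl : A → A
  comp : A → A → A
  conv : A → A

/-- The operations of an abstract relation algebra. -/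
def RAOps.ofClass (A : Type) [RelationAlgebra A] : RAOps A :=
  ⟨⊥, ⊤, RelationAlgebra.one', (· ⊔ ·), (· ⊓ ·), (·ᶜ), RelationAlgebra.comp,
    RelationAlgebra.conv⟩

/-- The operations of the rainbow complex algebra `B_{G,H}`. -/
def rbOps (G H : BinStruct σ) : RAOps (Set (RbAtom G.V H.V)) :=
  ⟨∅, Set.univ, {RbAtom.id}, (· ∪ ·), (· ∩ ·), (·ᶜ), rbComp G H, rbConv⟩

/-- Terms in the language of relation algebras with variables `x_0, …, x_{c-1}`. -/
inductive RATerm (c : ℕ) : Type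
  | var (i : Fin c) : RATerm c
  | bot : RATerm c
  | top : RATerm c
  | one' : RATerm c
  | sup (s t : RATerm c) : RATerm c
  | inf (s t : RATerm c) : RATerm c
  | compl (t : RATerm c) : RATerm c
  | comp (s t : RATerm c) : RATerm c
  | conv (t : RATerm c) : RATerm c

namespace RATerm

variable {c : ℕ} {A : Type}

/-- Evaluation of a term under a total assignment of the variables. -/
def eval (ops : RAOps A) (v : Fin c → A) : RATerm c → A
  | var i => v i
  | bot => ops.bot
  | top => ops.top
  | one' => ops.one'
  | sup s t => ops.sup (s.eval ops v) (t.eval ops v)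
  | inf s t => ops.inf (s.eval ops v) (t.eval ops v)
  | compl t => ops.compl (t.eval ops v)
  | comp s t => ops.comp (s.eval ops v) (t.eval ops v)
  | conv t => ops.conv (t.eval ops v)

/-- Evaluation of a term under a partial assignment of the variables; defined
just when every variable of the term lies in the domain of the assignment. -/
def evalo (ops : RAOps A) (v : Fin c → Option A) : RATerm c → Option A
  | var i => v i
  | bot => some ops.bot
  | top => some ops.top
  | one' => some ops.one'
  | sup s t => (s.evalo ops v).bind fun a => (t.evalo ops v).map fun b => ops.sup a b
  | inf s t => (s.evalo ops v).bind fun a => (t.evalo ops v).map fun b => ops.inf a b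
  | compl t => (t.evalo ops v).map ops.compl
  | comp s t => (s.evalo ops v).bind fun a => (t.evalo ops v).map fun b => ops.comp a b
  | conv t => (t.evalo ops v).map ops.conv

/-- The variables occurring in a term. -/
def vars : RATerm c → Finset (Fin c)
  | var i => {i}
  | bot => ∅
  | top => ∅
  | one' => ∅
  | sup s t => s.vars ∪ t.vars
  | inf s t => s.vars ∪ t.vars
  | compl t => t.vars
  | comp s t => s.vars ∪ t.vars
  | conv t => t.vars

end RATerm

/-- First-order formulas in the language of relation algebras with variables
`x_0, …, x_{c-1}`. -/
inductive RAFormula (c : ℕ) : Type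
  | eq (s t : RATerm c) : RAFormula c
  | not (φ : RAFormula c) : RAFormula c
  | and (φ ψ : RAFormula c) : RAFormula c
  | ex (i : Fin c) (φ : RAFormula c) : RAFormula c

namespace RAFormula

variable {c : ℕ} {A : Type}

/-- Quantifier depth of a formula. -/
def qd : RAFormula c → ℕ
  | eq _ _ => 0
  | not φ => φ.qd
  | and φ ψ => max φ.qd ψ.qd
  | ex _ φ => φ.qd + 1

/-- Free variables of a formula. -/
def freeVars : RAFormula c → Finset (Fin c)
  | eq s t => s.vars ∪ t.vars
  | not φ => φ.freeVars
  | and φ ψ => φ.freeVars ∪ ψ.freeVars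
  | ex i φ => φ.freeVars \ {i}

/-- Satisfaction of a formula under a total assignment of the variables. -/
def Sat (ops : RAOps A) (v : Fin c → A) : RAFormula c → Prop
  | eq s t => s.eval ops v = t.eval ops v
  | not φ => ¬ Sat ops v φ
  | and φ ψ => Sat ops v φ ∧ Sat ops v ψ
  | ex i φ => ∃ a : A, Sat ops (Function.update v i a) φ

end RAFormula

/-! ## The pebble equivalence game on relation algebras -/

/-- The position `(α,β)` of the pebble game is good for `∃`: the two partial maps have
the same domain and the correspondence `t^α ↦ t^β` between the generated subalgebras
(given by evaluating terms whose variables lie in the common domain) is a well-defined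
isomorphism. -/
def GoodPos {A B : Type} (opsA : RAOps A) (opsB : RAOps B) (c : ℕ)
    (α : Fin c → Option A) (β : Fin c → Option B) : Prop :=
  (∀ i : Fin c, (α i).isSome ↔ (β i).isSome) ∧
  ∀ s t : RATerm c,
    (s.evalo opsA α = t.evalo opsA α ↔ s.evalo opsB β = t.evalo opsB β)

/-- `∃` has a winning strategy in the `c`-pebble, `n`-round equivalence game
`Γ^c_n(A, α, B, β)` (for finite `n`). -/
def ExWinsPebble {A B : Type} (opsA : RAOps A) (opsB : RAOps B) (c : ℕ) :
    ℕ → (Fin c → Option A) → (Fin c → Option B) → Prop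
  | 0, α, β => GoodPos opsA opsB c α β
  | n + 1, α, β => GoodPos opsA opsB c α β ∧
      (∀ (t : Fin c) (a : A), ∃ b : B,
        ExWinsPebble opsA opsB c n
          (Function.update α t (some a)) (Function.update β t (some b))) ∧
      (∀ (t : Fin c) (b : B), ∃ a : A,
        ExWinsPebble opsA opsB c n
          (Function.update α t (some a)) (Function.update β t (some b)))

/-- `∃` has a winning strategy in the infinitely long `c`-pebble equivalence game
`Γ^c_ω(A, α, B, β)`. -/
def ExWinsPebbleOmega {A B : Type} (opsA : RAOps A) (opsB : RAOps B) (c : ℕ)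
    (α : Fin c → Option A) (β : Fin c → Option B) : Prop :=
  ∃ Inv : (Fin c → Option A) → (Fin c → Option B) → Prop,
    Inv α β ∧
    (∀ α' β', Inv α' β' → GoodPos opsA opsB c α' β') ∧
    (∀ α' β', Inv α' β' → ∀ (t : Fin c) (a : A), ∃ b : B,
        Inv (Function.update α' t (some a)) (Function.update β' t (some b))) ∧
    (∀ α' β', Inv α' β' → ∀ (t : Fin c) (b : B), ∃ a : A,
        Inv (Function.update α' t (some a)) (Function.update β' t (some b)))

/-- `∃` has a winning strategy in the `c`-pebble, `n`-round equivalence game, where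
`n ≤ ω` (`n : ℕ∞`). -/
def ExWinsPebbleE {A B : Type} (opsA : RAOps A) (opsB : RAOps B) (c : ℕ)
    (n : ℕ∞) (α : Fin c → Option A) (β : Fin c → Option B) : Prop :=
  match n with
  | ⊤ => ExWinsPebbleOmega opsA opsB c α β
  | (m : ℕ) => ExWinsPebble opsA opsB c m α β

/-! ## The mirroring strategy -/

/-- The set of green subscripts of an element of a rainbow algebra. -/
def greenPart {V F : Type} (x : Set (RbAtom V F)) : Set V := {i | RbAtom.green i ∈ x}

/-- The element of the other rainbow algebra with the same non-green part as `x` and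
green part determined by `Y`. -/
def mirrorElt {V W F : Type} (x : Set (RbAtom V F)) (Y : Set W) : Set (RbAtom W F) :=
  fun a => match a with
  | RbAtom.green j => j ∈ Y
  | RbAtom.id => RbAtom.id ∈ x
  | RbAtom.black => RbAtom.black ∈ x
  | RbAtom.white => RbAtom.white ∈ x
  | RbAtom.yellow => RbAtom.yellow ∈ x
  | RbAtom.red j j' => RbAtom.red j j' ∈ x

/-- Inclusion of the first `c` colours into the `c+3` colours of the parallel game. -/
def liftCol {c : ℕ} (t : Fin c) : Fin (c + 3) := Fin.castLE (Nat.le_add_right c 3) t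

/-- A combined state of a play of the pebble game `Γ^c(B_{G,F}, B_{H,F})` together
with the parallel play of the colouring game `G^{c+3}_ω(G,H)`, recording also the
set of colours used so far. -/
structure MirrorState (c : ℕ) (G H F : BinStruct σ) : Type where
  α : Fin c → Option (Set (RbAtom G.V F.V))
  β : Fin c → Option (Set (RbAtom H.V F.V))
  g : Fin (c + 3) → Set G.V
  h : Fin (c + 3) → Set H.V
  used : Set (Fin (c + 3))

/-- The initial state: no pebbles placed, all vertices uncoloured, no colour used. -/
def mirrorInit (c : ℕ) (G H F : BinStruct σ) : MirrorState c G H F :=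
  ⟨fun _ => none, fun _ => none, fun _ => ∅, fun _ => ∅, ∅⟩

/-- `Inv` is a winning invariant witnessing a winning strategy for `∃` in the
colouring game `G^c_ω(G,H)` (from the initial position). -/
def IsColInvariant (G H : BinStruct σ) (c : ℕ)
    (Inv : (Fin c → Set G.V) → (Fin c → Set H.V) → Prop) : Prop :=
  Inv (fun _ => ∅) (fun _ => ∅) ∧
  (∀ g h, Inv g h → ¬ ColWin G H c g h) ∧
  (∀ g h, Inv g h → ∀ (t : Fin c) (S : Set G.V), ∃ T : Set H.V,
      Inv (Function.update g t S) (Function.update h t T)) ∧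
  (∀ g h, Inv g h → ∀ (t : Fin c) (T : Set H.V), ∃ S : Set G.V,
      Inv (Function.update g t S) (Function.update h t T))

/-- One round of the pebble game `Γ^c(B_{G,F}, B_{H,F})` in which `∃` plays the
mirroring strategy induced by the colouring-game winning strategy witnessed by the
invariant `Inv`: when `∀` plays pebble `t` on an element of one algebra, `∃` colours
the set of its green subscripts with colour `t` in the parallel colouring game,
obtains a response keeping the parallel play inside `Inv`, and answers with the
element with identical non-green part and green part determined by that response. -/
inductive MirrorStep (G H F : BinStruct σ) (c : ℕ)
    (Inv : (Fin (c + 3) → Set G.V) → (Fin (c + 3) → Set H.V) → Prop) :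
    MirrorState c G H F → MirrorState c G H F → Prop
  | fromG (s : MirrorState c G H F) (t : Fin c) (x : Set (RbAtom G.V F.V)) (Y : Set H.V) :
      Inv (Function.update s.g (liftCol t) (greenPart x))
          (Function.update s.h (liftCol t) Y) →
      MirrorStep G H F c Inv s
        ⟨Function.update s.α t (some x),
         Function.update s.β t (some (mirrorElt x Y)),
         Function.update s.g (liftCol t) (greenPart x),
         Function.update s.h (liftCol t) Y,
         insert (liftCol t) s.used⟩
  | fromH (s : MirrorState c G H F) (t : Fin c) (y : Set (RbAtom H.V F.V)) (X : Set G.V) :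
      Inv (Function.update s.g (liftCol t) X)
          (Function.update s.h (liftCol t) (greenPart y)) →
      MirrorStep G H F c Inv s
        ⟨Function.update s.α t (some (mirrorElt y X)),
         Function.update s.β t (some y),
         Function.update s.g (liftCol t) X,
         Function.update s.h (liftCol t) (greenPart y),
         insert (liftCol t) s.used⟩

/-- The states reachable in a play of the pebble game `Γ^c(B_{G,F}, B_{H,F})`
during which `∃` plays using the mirroring strategy. -/
def MirrorReachable (G H F : BinStruct σ) (c : ℕ)
    (Inv : (Fin (c + 3) → Set G.V) → (Fin (c + 3) → Set H.V) → Prop)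
    (s : MirrorState c G H F) : Prop :=
  Relation.ReflTransGen (MirrorStep G H F c Inv) (mirrorInit c G H F) s

namespace RB

abbrev Atm {σ : Type} (G H : BinStruct σ) := RbAtom G.V H.V

section basics
variable {σ : Type} {G H : BinStruct σ}

theorem conv_conv {α β : Type} (a : RbAtom α β) : a.conv.conv = a := by
  cases a <;> rfl

theorem conv_inj {α β : Type} {a b : RbAtom α β} (h : a.conv = b.conv) : a = b := by
  rw [← conv_conv a, h, conv_conv]

/-- Closure of the forbidden triples under three Peircean transforms. -/
theorem forb_t1 {a b c : Atm G H} (h : Forbidden G H a b c) : Forbidden G H a.conv c b := by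
  obtain ⟨x, y, z, hb, h⟩ := h
  refine ⟨x, y, z, hb, ?_⟩
  simp only [Prod.mk.injEq] at h ⊢
  rcases h with ⟨rfl, rfl, rfl⟩ | ⟨rfl, rfl, rfl⟩ | ⟨rfl, rfl, rfl⟩ | ⟨rfl, rfl, rfl⟩ |
    ⟨rfl, rfl, rfl⟩ | ⟨rfl, rfl, rfl⟩ <;> simp [conv_conv]

theorem forb_t2 {a b c : Atm G H} (h : Forbidden G H a b c) : Forbidden G H c b.conv a := by
  obtain ⟨x, y, z, hb, h⟩ := h
  refine ⟨x, y, z, hb, ?_⟩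
  simp only [Prod.mk.injEq] at h ⊢
  rcases h with ⟨rfl, rfl, rfl⟩ | ⟨rfl, rfl, rfl⟩ | ⟨rfl, rfl, rfl⟩ | ⟨rfl, rfl, rfl⟩ |
    ⟨rfl, rfl, rfl⟩ | ⟨rfl, rfl, rfl⟩ <;> simp [conv_conv]

theorem forb_t3 {a b c : Atm G H} (h : Forbidden G H a b c) :
    Forbidden G H b.conv a.conv c.conv := by
  exact forb_t1 (forb_t2 (forb_t1 h))

theorem forb_base {a b c : Atm G H} (h : BaseForbidden G H a b c) : Forbidden G H a b c :=
  ⟨a, b, c, h, Or.inl rfl⟩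

theorem forb_id {a b : Atm G H} (h : a ≠ b) : Forbidden G H .id a b :=
  forb_base (.ident a b h)

theorem forb_id_mid {a b : Atm G H} (h : a ≠ b) : Forbidden G H a .id b := by
  have h1 : Forbidden G H .id a.conv b.conv := forb_id (fun e => h (conv_inj e))
  have := forb_t3 h1
  rw [conv_conv, conv_conv] at this
  exact this

theorem forb_id_right {a b : Atm G H} (h : b ≠ a.conv) : Forbidden G H a b .id := by
  have h1 : Forbidden G H a.conv .id b := forb_id_mid (Ne.symm h)
  have := forb_t1 h1
  rwa [conv_conv] at this

theorem ok_id_left (a : Atm G H) : ¬ Forbidden G H .id a a := by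
  rintro ⟨x, y, z, hb, h⟩
  simp only [Prod.mk.injEq] at h
  cases hb <;> simp [RbAtom.conv] at h <;> grind [conv_inj, RbAtom.conv]

theorem ok_id_mid (a : Atm G H) : ¬ Forbidden G H a .id a := by
  intro h
  have := forb_t3 h
  exact ok_id_left _ this

theorem ok_id_right (a : Atm G H) : ¬ Forbidden G H a a.conv .id := by
  intro h
  have := forb_t1 h
  exact ok_id_mid _ this

theorem ok_white {a c : Atm G H} (ha : a ≠ .id) (hc : c ≠ .id)
    (h : ¬ ((∃ i, a = .green i) ∧ ∃ i, c = .green i)) : ¬ Forbidden G H a .white c := by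
  rintro ⟨x, y, z, hb, h'⟩
  simp only [Prod.mk.injEq] at h'
  cases hb <;> simp [RbAtom.conv] at h' <;> grind [conv_inj, RbAtom.conv]

theorem ok_black {a c : Atm G H} (ha : a ≠ .id) (hc : c ≠ .id)
    (h : ¬ (a = .yellow ∧ c = .yellow)) : ¬ Forbidden G H a .black c := by
  rintro ⟨x, y, z, hb, h'⟩
  simp only [Prod.mk.injEq] at h'
  cases hb <;> simp [RbAtom.conv] at h' <;> grind [conv_inj, RbAtom.conv]

theorem ok_rrr (j k l : H.V) : ¬ Forbidden G H (.red j k) (.red k l) (.red j l) := by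
  rintro ⟨x, y, z, hb, h'⟩
  simp only [Prod.mk.injEq] at h'
  cases hb <;> simp [RbAtom.conv] at h' <;> grind [conv_inj, RbAtom.conv]

theorem ok_yry (j k : H.V) : ¬ Forbidden G H .yellow (.red j k) .yellow := by
  rintro ⟨x, y, z, hb, h'⟩
  simp only [Prod.mk.injEq] at h'
  cases hb <;> simp [RbAtom.conv] at h'

theorem ok_yyr (j k : H.V) : ¬ Forbidden G H .yellow .yellow (.red j k) := by
  rintro ⟨x, y, z, hb, h'⟩
  simp only [Prod.mk.injEq] at h'
  cases hb <;> simp [RbAtom.conv] at h'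

theorem partialHom2_symm {i i' : G.V} {j j' : H.V} (h : PartialHom2 G H i i' j j') :
    PartialHom2 G H i' i j' j := fun b => ⟨(h b).2, (h b).1⟩

theorem ok_ggr {i i' : G.V} {j j' : H.V} (hne : i ≠ i') (h : PartialHom2 G H i i' j j') :
    ¬ Forbidden G H (.green i) (.green i') (.red j j') := by
  have h2 := partialHom2_symm h
  rintro ⟨x, y, z, hb, h'⟩
  simp only [Prod.mk.injEq] at h'
  cases hb <;> simp [RbAtom.conv] at h' <;> grind

theorem ok_gyc {i : G.V} {c : Atm G H} (hc : c ≠ .id) :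
    ¬ Forbidden G H (.green i) .yellow c := by
  rintro ⟨x, y, z, hb, h'⟩
  simp only [Prod.mk.injEq] at h'
  cases hb <;> simp [RbAtom.conv] at h' <;> grind

theorem ok_grg {i i' : G.V} {j j' : H.V} (hne : i ≠ i') (h : PartialHom2 G H i i' j j') :
    ¬ Forbidden G H (.green i) (.red j j') (.green i') := by
  intro hf
  exact ok_ggr hne h (forb_t1 hf)

theorem rrr_eq {j1 j2 k2 k3 l1 l3 : H.V}
    (h : ¬ Forbidden G H (.red j1 j2) (.red k2 k3) (.red l1 l3)) :
    j1 = l1 ∧ j2 = k2 ∧ k3 = l3 := by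
  by_contra hc
  exact h (forb_base (.rrr _ _ _ _ _ _ hc))

theorem ggr_hom {i i' : G.V} {j j' : H.V}
    (h : ¬ Forbidden G H (.green i) (.green i') (.red j j')) :
    i ≠ i' ∧ PartialHom2 G H i i' j j' := by
  by_contra hc
  exact h (forb_base (.ggr _ _ _ _ hc))

/-- two green and two yellow sides force a red edge -/
theorem forced_red {i i' : G.V} {c : Atm G H} (hc : c ≠ .id)
    (h : ¬ Forbidden G H (.green i) (.green i') c)
    (hy : ¬ Forbidden G H .yellow .yellow c) :
    ∃ j j', c = .red j j' ∧ i ≠ i' ∧ PartialHom2 G H i i' j j' := by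
  cases c with
  | id => exact absurd rfl hc
  | black => exact absurd (forb_base .yyb) hy
  | white => exact absurd (forb_base (.ggw _ _)) h
  | yellow => exact absurd (forb_base .yyy) hy
  | green k => exact absurd (forb_base (.ggg _ _ _)) h
  | red j j' => exact ⟨j, j', rfl, ggr_hom h⟩

end basics

section backward
variable {σ : Type} {G H : BinStruct σ}

/-- Abstract labelled structure extracted from a complete representation. -/
structure Rep (G H : BinStruct σ) (X : Type) (R : Atm G H → X → X → Prop) : Prop where
  ne : ∀ a, ∃ u v, R a u v
  uniq : ∀ {a b u v}, R a u v → R b u v → a = b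
  comp : ∀ {a b u w v}, R a u w → R b w v → ∃ c, R c u v ∧ ¬ Forbidden G H a b c
  sat : ∀ {a b c u v}, R c u v → ¬ Forbidden G H a b c → ∃ w, R a u w ∧ R b w v
  conv : ∀ {a u v}, R a u v → R a.conv v u

theorem rep_of {G H : BinStruct σ} (h : CompletelyRepresentable G H) :
    ∃ (X : Type) (R : Atm G H → X → X → Prop), Rep G H X R := by
  obtain ⟨X, θ, hinj, hU, hC, hcomp, hconv, hid⟩ := h
  have hempty : θ ∅ = ∅ := by
    have := hU ∅
    simpa using this
  have hmono : ∀ {S T : Set (Atm G H)}, S ⊆ T → θ S ⊆ θ T := by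
    intro S T hST
    have := hU {S, T}
    have e : ⋃₀ ({S, T} : Set (Set (Atm G H))) = T := by
      simp [Set.union_eq_right.mpr hST]
    rw [e] at this
    rw [this]
    intro p hp
    exact ⟨θ S, ⟨S, by simp, rfl⟩, hp⟩
  have key : ∀ {S : Set (Atm G H)} {c p}, p ∈ θ {c} → p ∈ θ S → c ∈ S := by
    intro S c p hp hS
    by_contra hc
    have h1 : S ⊆ {c}ᶜ := by
      intro a ha hac
      exact hc (hac ▸ ha)
    have := hmono h1 hS
    rw [hC] at this
    exact this.2 hp
  have ex : ∀ {S : Set (Atm G H)} {p}, p ∈ θ S → ∃ c ∈ S, p ∈ θ {c} := by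
    intro S p hp
    have e : ⋃₀ ((fun a => ({a} : Set (Atm G H))) '' S) = S := by
      ext a; simp
    rw [← e, hU] at hp
    obtain ⟨_, ⟨_, ⟨c, hc, rfl⟩, rfl⟩, hp⟩ := hp
    exact ⟨c, hc, hp⟩
  refine ⟨X, fun a u v => (u, v) ∈ θ {a}, ?_, ?_, ?_, ?_, ?_⟩
  · intro a
    by_contra hcon
    push Not at hcon
    have : θ {a} = θ ∅ := by
      rw [hempty]
      ext ⟨u, v⟩
      simpa using hcon u v
    exact Set.singleton_ne_empty a (hinj this)
  · intro a b u v h1 h2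
    exact (key (S := {b}) h1 h2 : a ∈ ({b} : Set _))
  · intro a b u w v h1 h2
    have : (u, v) ∈ θ (rbComp G H {a} {b}) := by
      rw [hcomp]; exact ⟨w, h1, h2⟩
    obtain ⟨c, ⟨a', ha', b', hb', hc⟩, hp⟩ := ex this
    rw [Set.mem_singleton_iff] at ha' hb'
    subst ha' hb'
    exact ⟨c, hp, hc⟩
  · intro a b c u v h1 h2
    have : (u, v) ∈ θ (rbComp G H {a} {b}) := by
      refine hmono ?_ h1
      rintro _ rfl
      exact ⟨a, rfl, b, rfl, h2⟩
    rw [hcomp] at this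
    exact this
  · intro a u v h1
    have e : ({a.conv} : Set (Atm G H)) = rbConv {a} := by
      ext c
      simp only [rbConv, Set.mem_singleton_iff, Set.mem_ofPred_eq]
      exact ⟨fun h => by rw [h, conv_conv], fun h => by rw [← h, conv_conv]⟩
    show (v, u) ∈ θ {a.conv}
    rw [e, hconv]
    exact h1

variable {X : Type} {R : Atm G H → X → X → Prop}

theorem Rep.cons (hR : Rep G H X R) {a b c u w v} (h1 : R a u w) (h2 : R b w v) (h3 : R c u v) :
    ¬ Forbidden G H a b c := by
  obtain ⟨c', hc', hf⟩ := hR.comp h1 h2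
  rwa [hR.uniq h3 hc']

theorem Rep.red (hR : Rep G H X R) {x0 x1 z z' : X} {k l : G.V} (hkl : k ≠ l)
    (h1 : R (.green k) x0 z) (h2 : R .yellow z x1)
    (h3 : R (.green l) x0 z') (h4 : R .yellow z' x1) :
    ∃ j j', R (.red j j') z z' ∧ PartialHom2 G H k l j j' := by
  obtain ⟨c, hc, hf⟩ := hR.comp (hR.conv h1) h3
  have hy := hR.cons h2 (hR.conv h4) hc
  have hne : c ≠ .id := by
    rintro rfl
    refine hf (forb_id_right ?_)
    simp [RbAtom.conv, Ne.symm hkl]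
  obtain ⟨j, j', rfl, -, hp⟩ := forced_red hne hf hy
  exact ⟨j, j', hc, hp⟩

theorem backward (h : CompletelyRepresentable G H) :
    (∀ i i' : G.V, i ≠ i' → ∃ j j' : H.V, PartialHom2 G H i i' j j') ∧
      (∀ (i i' : G.V) (j j' : H.V), i ≠ i' → PartialHom2 G H i i' j j' →
        ∃ f : G.V → H.V, IsHom G H f ∧ f i = j ∧ f i' = j') := by
  obtain ⟨X, R, hR⟩ := rep_of h
  constructor
  · intro i i' hne
    obtain ⟨x0, x1, hx⟩ := hR.ne .black
    have hsat : ∀ k, ∃ w, R (.green k) x0 w ∧ R .yellow w x1 :=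
      fun k => hR.sat hx (ok_gyc (by simp))
    obtain ⟨z, hz, hz'⟩ := hsat i
    obtain ⟨w, hw, hw'⟩ := hsat i'
    obtain ⟨j, j', -, hp⟩ := hR.red hne hz hz' hw hw'
    exact ⟨j, j', hp⟩
  · intro i i' j j' hne hp
    obtain ⟨zi, zi', hz⟩ := hR.ne (.red j j')
    obtain ⟨x0, h01, h02⟩ := hR.sat hz (ok_ggr hne hp)
    obtain ⟨x1, h11, h12⟩ := hR.sat hz (ok_yyr j j')
    replace h01 := hR.conv h01
    replace h12 := hR.conv h12
    obtain ⟨c, hc, hcf⟩ := hR.comp h01 h11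
    have hcid : c ≠ .id := by
      rintro rfl
      exact hcf (forb_id_right (by simp [RbAtom.conv]))
    have hsat : ∀ k, ∃ w, (R (.green k) x0 w ∧ R .yellow w x1) ∧ (k = i → w = zi) ∧
        (k = i' → w = zi') := by
      intro k
      by_cases hk : k = i
      · subst hk
        exact ⟨zi, ⟨h01, h11⟩, fun _ => rfl, fun h => absurd h hne⟩
      by_cases hk' : k = i'
      · subst hk'
        exact ⟨zi', ⟨h02, h12⟩, fun h => absurd h hk, fun _ => rfl⟩
      obtain ⟨w, hw⟩ := hR.sat hc (ok_gyc (i := k) hcid)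
      exact ⟨w, hw, fun h => absurd h hk, fun h => absurd h hk'⟩
    choose z hz1 hz2 hz3 using hsat
    have hzi := hz2 i rfl
    have hzi' := hz3 i' rfl
    rw [← hzi, ← hzi'] at hz
    have hred : ∀ k l, k ≠ l → ∃ j j', R (.red j j') (z k) (z l) ∧ PartialHom2 G H k l j j' :=
      fun k l hkl => hR.red hkl (hz1 k).1 (hz1 k).2 (hz1 l).1 (hz1 l).2
    have hf : ∀ k, ∃ m, (k = i → m = j) ∧ (k ≠ i → R (.red j m) (z i) (z k)) := by
      intro k
      by_cases hk : k = i
      · exact ⟨j, fun _ => rfl, fun h => absurd hk h⟩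
      by_cases hk' : k = i'
      · exact ⟨j', fun h => absurd h hk, fun _ => hk' ▸ hz⟩
      obtain ⟨p, q, hpq, -⟩ := hred i k (Ne.symm hk)
      obtain ⟨p', q', hpq', -⟩ := hred i' k (Ne.symm hk')
      have := (rrr_eq (hR.cons hz hpq' hpq)).1
      subst this
      exact ⟨q, fun h => absurd h hk, fun _ => hpq⟩
    choose f hf1 hf2 using hf
    have hfi : f i = j := hf1 i rfl
    have hph : ∀ k, k ≠ i → PartialHom2 G H i k (f i) (f k) := by
      intro k hk
      obtain ⟨p, q, hpq, h⟩ := hred i k (Ne.symm hk)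
      have := hR.uniq hpq (hf2 k hk)
      simp only [RbAtom.red.injEq] at this
      rw [hfi, ← this.1, ← this.2]; exact h
    refine ⟨f, ?_, hfi, ?_⟩
    · intro b k l hkl hb
      by_cases hk : k = i
      · subst hk
        exact (hph l (Ne.symm hkl) b).1 hb
      by_cases hl : l = i
      · subst hl
        exact (hph k hk b).2 hb
      obtain ⟨p, q, hpq, h⟩ := hred k l hkl
      have := rrr_eq (hR.cons (hf2 k hk) hpq (hf2 l hl))
      rw [this.2.1, ← this.2.2]
      exact (h b).1 hb
    · have := hR.uniq hz (hf2 i' (Ne.symm hne))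
      simp only [RbAtom.red.injEq] at this
      exact this.2.symm

end backward
end RB

namespace RB

/-- Names of the points of the networks. -/
inductive PName (A : Type) : Type
  | root : PName A
  | node (x y : PName A) (a b : A) : PName A

section forward
variable {σ : Type} {G H : BinStruct σ}

abbrev Pt {σ : Type} (G H : BinStruct σ) := PName (Atm G H)

def Good (G H : BinStruct σ) (t : Option (G.V → H.V)) : Prop :=
  ∀ i i' : G.V, i ≠ i' → ∃ f, t = some f ∧ IsHom G H f

/-- Atomic networks, with a choice of a homomorphism for each cone. -/
structure Net (G H : BinStruct σ) where
  D : Set (Pt G H)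
  L : Pt G H → Pt G H → Atm G H
  F : Pt G H → Pt G H → Option (G.V → H.V)
  root_mem : .root ∈ D
  id_iff : ∀ u ∈ D, ∀ v ∈ D, L u v = .id ↔ u = v
  conv : ∀ u ∈ D, ∀ v ∈ D, L v u = (L u v).conv
  cons : ∀ u ∈ D, ∀ w ∈ D, ∀ v ∈ D, ¬ Forbidden G H (L u w) (L w v) (L u v)
  good : ∀ x ∈ D, ∀ y ∈ D, Good G H (F x y)
  cone : ∀ x ∈ D, ∀ y ∈ D, ∀ u ∈ D, ∀ v ∈ D, u ≠ v → ∀ i i', L x u = .green i →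
    L x v = .green i' → L y u = .yellow → L y v = .yellow →
    ∃ f, F x y = some f ∧ L u v = .red (f i) (f i')
  name : ∀ x y a b, PName.node x y a b ∈ D → x ∈ D ∧ y ∈ D ∧
    L x (.node x y a b) = a ∧ L (.node x y a b) y = b

instance : Preorder (Net G H) where
  le N M := N.D ⊆ M.D ∧ ∀ u ∈ N.D, ∀ v ∈ N.D, M.L u v = N.L u v ∧ M.F u v = N.F u v
  le_refl N := ⟨subset_rfl, fun _ _ _ _ => ⟨rfl, rfl⟩⟩
  le_trans N M K h1 h2 := ⟨h1.1.trans h2.1, fun u hu v hv =>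
    ⟨((h2.2 u (h1.1 hu) v (h1.1 hv)).1).trans (h1.2 u hu v hv).1,
     ((h2.2 u (h1.1 hu) v (h1.1 hv)).2).trans (h1.2 u hu v hv).2⟩⟩

theorem Net.le_def {N M : Net G H} : N ≤ M ↔
    N.D ⊆ M.D ∧ ∀ u ∈ N.D, ∀ v ∈ N.D, M.L u v = N.L u v ∧ M.F u v = N.F u v := Iff.rfl

open Classical in
theorem chain_bdd (c : Set (Net G H)) (hc : IsChain (· ≤ ·) c) (hne : c.Nonempty) :
    BddAbove c := by
  let D : Set (Pt G H) := {u | ∃ N ∈ c, u ∈ N.D}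
  let L : Pt G H → Pt G H → Atm G H := fun u v =>
    if h : ∃ N ∈ c, u ∈ N.D ∧ v ∈ N.D then (Classical.choose h).L u v else .id
  let F : Pt G H → Pt G H → Option (G.V → H.V) := fun u v =>
    if h : ∃ N ∈ c, u ∈ N.D ∧ v ∈ N.D then (Classical.choose h).F u v else none
  have agree : ∀ N ∈ c, ∀ M ∈ c, ∀ u v, u ∈ N.D → v ∈ N.D → u ∈ M.D → v ∈ M.D →
      M.L u v = N.L u v ∧ M.F u v = N.F u v := by
    intro N hN M hM u v h1 h2 h3 h4
    rcases hc.total hN hM with h | h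
    · exact h.2 u h1 v h2
    · exact ⟨(h.2 u h3 v h4).1.symm, (h.2 u h3 v h4).2.symm⟩
  have hL : ∀ N ∈ c, ∀ u ∈ N.D, ∀ v ∈ N.D, L u v = N.L u v ∧ F u v = N.F u v := by
    intro N hN u hu v hv
    have h : ∃ N ∈ c, u ∈ N.D ∧ v ∈ N.D := ⟨N, hN, hu, hv⟩
    have hs := Classical.choose_spec h
    have := agree N hN _ hs.1 u v hu hv hs.2.1 hs.2.2
    simp only [L, F, dif_pos h]
    exact this
  have two : ∀ N ∈ c, ∀ u ∈ D, ∃ M ∈ c, N ≤ M ∧ u ∈ M.D := by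
    rintro N hN u ⟨M, hM, hu⟩
    rcases hc.total hN hM with h | h
    · exact ⟨M, hM, h, hu⟩
    · exact ⟨N, hN, le_rfl, h.1 hu⟩
  have d2 : ∀ u ∈ D, ∀ v ∈ D, ∃ N ∈ c, u ∈ N.D ∧ v ∈ N.D := by
    rintro u ⟨N, hN, hu⟩ v hv
    obtain ⟨M, hM, hle, h⟩ := two N hN v hv
    exact ⟨M, hM, hle.1 hu, h⟩
  have d3 : ∀ u ∈ D, ∀ v ∈ D, ∀ w ∈ D, ∃ N ∈ c, u ∈ N.D ∧ v ∈ N.D ∧ w ∈ N.D := by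
    intro u hu v hv w hw
    obtain ⟨N, hN, h1, h2⟩ := d2 u hu v hv
    obtain ⟨M, hM, hle, h⟩ := two N hN w hw
    exact ⟨M, hM, hle.1 h1, hle.1 h2, h⟩
  have d4 : ∀ u ∈ D, ∀ v ∈ D, ∀ w ∈ D, ∀ z ∈ D,
      ∃ N ∈ c, u ∈ N.D ∧ v ∈ N.D ∧ w ∈ N.D ∧ z ∈ N.D := by
    intro u hu v hv w hw z hz
    obtain ⟨N, hN, h1, h2, h3⟩ := d3 u hu v hv w hw
    obtain ⟨M, hM, hle, h⟩ := two N hN z hz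
    exact ⟨M, hM, hle.1 h1, hle.1 h2, hle.1 h3, h⟩
  refine ⟨⟨D, L, F, ?_, ?_, ?_, ?_, ?_, ?_, ?_⟩, ?_⟩
  · obtain ⟨N, hN⟩ := hne
    exact ⟨N, hN, N.root_mem⟩
  · intro u hu v hv
    obtain ⟨N, hN, h1, h2⟩ := d2 u hu v hv
    rw [(hL N hN u h1 v h2).1]
    exact N.id_iff u h1 v h2
  · intro u hu v hv
    obtain ⟨N, hN, h1, h2⟩ := d2 u hu v hv
    rw [(hL N hN u h1 v h2).1, (hL N hN v h2 u h1).1]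
    exact N.conv u h1 v h2
  · intro u hu w hw v hv
    obtain ⟨N, hN, h1, h2, h3⟩ := d3 u hu w hw v hv
    rw [(hL N hN u h1 w h2).1, (hL N hN w h2 v h3).1, (hL N hN u h1 v h3).1]
    exact N.cons u h1 w h2 v h3
  · intro u hu v hv
    obtain ⟨N, hN, h1, h2⟩ := d2 u hu v hv
    rw [(hL N hN u h1 v h2).2]
    exact N.good u h1 v h2
  · intro x hx y hy u hu v hv
    obtain ⟨N, hN, h1, h2, h3, h4⟩ := d4 x hx y hy u hu v hv
    rw [(hL N hN x h1 u h3).1, (hL N hN x h1 v h4).1, (hL N hN y h2 u h3).1,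
      (hL N hN y h2 v h4).1, (hL N hN u h3 v h4).1, (hL N hN x h1 y h2).2]
    exact N.cone x h1 y h2 u h3 v h4
  · rintro x y a b ⟨N, hN, h⟩
    obtain ⟨h1, h2, h3, h4⟩ := N.name x y a b h
    refine ⟨⟨N, hN, h1⟩, ⟨N, hN, h2⟩, ?_, ?_⟩
    · rw [(hL N hN _ h1 _ h).1, h3]
    · rw [(hL N hN _ h _ h2).1, h4]
  · intro N hN
    exact ⟨fun u hu => ⟨N, hN, hu⟩, hL N hN⟩

theorem conv_ne_id {α β : Type} {a : RbAtom α β} (h : a ≠ .id) : a.conv ≠ .id := by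
  cases a <;> simp_all [RbAtom.conv]

theorem cg {α β : Type} {a : RbAtom α β} {i : α} (h : a.conv = .green i) : a = .green i := by
  cases a <;> simp_all [RbAtom.conv]

theorem cy {α β : Type} {a : RbAtom α β} (h : a.conv = .yellow) : a = .yellow := by
  cases a <;> simp_all [RbAtom.conv]

open Classical in
set_option maxHeartbeats 1000000 in
/-- One-point extension of a network. -/
theorem one_point (N : Net G H) {p q : Pt G H} {α β : Atm G H} (hp : p ∈ N.D) (hq : q ∈ N.D)
    (hd : PName.node p q α β ∉ N.D)
    (E : Pt G H → Atm G H) (Fl Fr : Pt G H → Option (G.V → H.V)) (F0 : Option (G.V → H.V))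
    (hEp : E p = α) (hEq : (E q).conv = β)
    (e1 : ∀ v ∈ N.D, E v ≠ .id)
    (e2 : ∀ u ∈ N.D, ∀ v ∈ N.D, ¬ Forbidden G H (E u) (E v).conv (N.L u v))
    (e3 : ∀ x ∈ N.D, ∀ y ∈ N.D, ∀ u ∈ N.D, ∀ i i', N.L x u = .green i → E x = .green i' →
      N.L y u = .yellow → E y = .yellow → ∃ f, N.F x y = some f ∧ E u = .red (f i) (f i'))
    (gl : ∀ y ∈ N.D, Good G H (Fl y)) (gr : ∀ x ∈ N.D, Good G H (Fr x)) (g0 : Good G H F0)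
    (el : ∀ y ∈ N.D, ∀ u ∈ N.D, ∀ v ∈ N.D, u ≠ v → ∀ i i', E u = .green i →
      E v = .green i' → N.L y u = .yellow → N.L y v = .yellow →
      ∃ f, Fl y = some f ∧ N.L u v = .red (f i) (f i'))
    (er : ∀ x ∈ N.D, ∀ u ∈ N.D, ∀ v ∈ N.D, u ≠ v → ∀ i i', N.L x u = .green i →
      N.L x v = .green i' → E u = .yellow → E v = .yellow →
      ∃ f, Fr x = some f ∧ N.L u v = .red (f i) (f i')) :
    ∃ M : Net G H, N ≤ M ∧ ∃ d ∈ M.D, M.L p d = α ∧ M.L d q = β := by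
  set d : Pt G H := PName.node p q α β with hdd
  let L : Pt G H → Pt G H → Atm G H := fun u v =>
    if u = d then (if v = d then .id else (E v).conv) else (if v = d then E u else N.L u v)
  let F : Pt G H → Pt G H → Option (G.V → H.V) := fun u v =>
    if u = d then (if v = d then F0 else Fl v) else (if v = d then Fr u else N.F u v)
  have nd : ∀ u ∈ N.D, u ≠ d := fun u hu h => hd (h ▸ hu)
  have Ldd : L d d = .id := by simp [L]
  have Ldv : ∀ v ∈ N.D, L d v = (E v).conv := fun v hv => by simp [L, nd v hv]
  have Lvd : ∀ v ∈ N.D, L v d = E v := fun v hv => by simp [L, nd v hv]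
  have Luv : ∀ u ∈ N.D, ∀ v ∈ N.D, L u v = N.L u v := fun u hu v hv => by
    simp [L, nd v hv, nd u hu]
  have Fdd : F d d = F0 := by simp [F]
  have Fdv : ∀ v ∈ N.D, F d v = Fl v := fun v hv => by simp [F, nd v hv]
  have Fvd : ∀ v ∈ N.D, F v d = Fr v := fun v hv => by simp [F, nd v hv]
  have Fuv : ∀ u ∈ N.D, ∀ v ∈ N.D, F u v = N.F u v := fun u hu v hv => by
    simp [F, nd v hv, nd u hu]
  have hconv : ∀ u ∈ insert d N.D, ∀ v ∈ insert d N.D, L v u = (L u v).conv := by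
    rintro u (rfl | hu) v (rfl | hv)
    · rw [Ldd]; rfl
    · rw [Ldv v hv, Lvd v hv, conv_conv]
    · rw [Ldv u hu, Lvd u hu]
    · rw [Luv u hu v hv, Luv v hv u hu, N.conv u hu v hv]
  refine ⟨⟨insert d N.D, L, F, Or.inr N.root_mem, ?_, hconv, ?_, ?_, ?_, ?_⟩, ?_, d,
    Or.inl rfl, ?_, ?_⟩
  · rintro u (rfl | hu) v (rfl | hv)
    · simp [Ldd]
    · rw [Ldv v hv]
      exact ⟨fun h => absurd h (conv_ne_id (e1 v hv)), fun h => absurd h.symm (nd v hv)⟩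
    · rw [Lvd u hu]
      exact ⟨fun h => absurd h (e1 u hu), fun h => absurd h (nd u hu)⟩
    · rw [Luv u hu v hv]; exact N.id_iff u hu v hv
  · rintro u (rfl | hu) w (rfl | hw) v (rfl | hv)
    · rw [Ldd]; exact ok_id_left _
    · rw [Ldd]; exact ok_id_left _
    · rw [Ldd, Ldv w hw, Lvd w hw]
      have := ok_id_right (E w).conv
      rwa [conv_conv] at this
    · rw [Ldv w hw, Ldv v hv, Luv w hw v hv]
      intro h
      have := forb_t1 h
      rw [conv_conv] at this
      exact e2 w hw v hv this
    · rw [Ldd]; exact ok_id_mid _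
    · rw [Lvd u hu, Ldv v hv, Luv u hu v hv]
      exact e2 u hu v hv
    · rw [Lvd u hu, Luv u hu w hw, Lvd w hw]
      intro h
      exact e2 u hu w hw (forb_t2 h)
    · rw [Luv u hu w hw, Luv w hw v hv, Luv u hu v hv]
      exact N.cons u hu w hw v hv
  · rintro x (rfl | hx) y (rfl | hy)
    · rw [Fdd]; exact g0
    · rw [Fdv y hy]; exact gl y hy
    · rw [Fvd x hx]; exact gr x hx
    · rw [Fuv x hx y hy]; exact N.good x hx y hy
  · rintro x hx y hy u hu v hv huv i i' h1 h2 h3 h4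
    have ux : u ≠ x := by
      rintro rfl
      have := hconv u hu u hu
      rcases hu with rfl | hu
      · rw [Ldd] at h1; simp at h1
      · rw [Luv _ hu _ hu, (N.id_iff u hu u hu).2 rfl] at h1; simp at h1
    rcases hx with rfl | hx
    · rcases hy with rfl | hy
      · rw [h1] at h3; simp at h3
      rcases hu with rfl | hu
      · exact absurd rfl ux
      rcases hv with rfl | hv
      · rw [Ldd] at h2; simp at h2
      rw [Ldv _ hu] at h1
      rw [Ldv _ hv] at h2
      rw [Luv _ hy _ hu] at h3
      rw [Luv _ hy _ hv] at h4
      rw [Fdv _ hy, Luv _ hu _ hv]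
      exact el y hy u hu v hv huv i i' (cg h1) (cg h2) h3 h4
    · rcases hy with rfl | hy
      · rcases hu with rfl | hu
        · rw [Ldd] at h3; simp at h3
        rcases hv with rfl | hv
        · rw [Ldd] at h4; simp at h4
        rw [Luv _ hx _ hu] at h1
        rw [Luv _ hx _ hv] at h2
        rw [Ldv _ hu] at h3
        rw [Ldv _ hv] at h4
        rw [Fvd _ hx, Luv _ hu _ hv]
        exact er x hx u hu v hv huv i i' h1 h2 (cy h3) (cy h4)
      · rw [Fuv x hx y hy]
        rcases hu with rfl | hu
        · rcases hv with rfl | hv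
          · exact absurd rfl huv
          rw [Lvd _ hx] at h1
          rw [Luv _ hx _ hv] at h2
          rw [Lvd _ hy] at h3
          rw [Luv _ hy _ hv] at h4
          obtain ⟨f, hf, hf'⟩ := e3 x hx y hy v hv i' i h2 h1 h4 h3
          refine ⟨f, hf, ?_⟩
          rw [Ldv _ hv, hf']; rfl
        · rcases hv with rfl | hv
          · rw [Luv _ hx _ hu] at h1
            rw [Lvd _ hx] at h2
            rw [Luv _ hy _ hu] at h3
            rw [Lvd _ hy] at h4
            rw [Lvd _ hu]
            exact e3 x hx y hy u hu i i' h1 h2 h3 h4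
          · rw [Luv _ hx _ hu] at h1
            rw [Luv _ hx _ hv] at h2
            rw [Luv _ hy _ hu] at h3
            rw [Luv _ hy _ hv] at h4
            rw [Luv _ hu _ hv]
            exact N.cone x hx y hy u hu v hv huv i i' h1 h2 h3 h4
  · rintro x y a b (h | h)
    · rw [h]
      rw [hdd] at h
      injection h with h1 h2 h3 h4
      subst h1 h2 h3 h4
      refine ⟨Or.inr hp, Or.inr hq, ?_, ?_⟩
      · rw [Lvd _ hp, hEp]
      · rw [Ldv _ hq, hEq]
    · obtain ⟨h1, h2, h3, h4⟩ := N.name x y a b h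
      refine ⟨Or.inr h1, Or.inr h2, ?_, ?_⟩
      · rw [Luv _ h1 _ h, h3]
      · rw [Luv _ h _ h2, h4]
  · exact ⟨fun u hu => Or.inr hu, fun u hu v hv => ⟨Luv u hu v hv, Fuv u hu v hv⟩⟩
  · show L p d = α
    rw [Lvd _ hp, hEp]
  · show L d q = β
    rw [Ldv _ hq, hEq]

end forward
end RB

namespace RB
section ext
variable {σ : Type} {G H : BinStruct σ}

/-- Condition (1) of the theorem. -/
def Cond (G H : BinStruct σ) : Prop :=
  (∀ i i' : G.V, i ≠ i' → ∃ j j' : H.V, PartialHom2 G H i i' j j') ∧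
      (∀ (i i' : G.V) (j j' : H.V), i ≠ i' → PartialHom2 G H i i' j j' →
        ∃ f : G.V → H.V, IsHom G H f ∧ f i = j ∧ f i' = j')

theorem exists_good (hC : Cond G H) : ∃ t, Good G H t := by
  by_cases h : ∃ i i' : G.V, i ≠ i'
  · obtain ⟨i, i', hne⟩ := h
    obtain ⟨j, j', hp⟩ := hC.1 i i' hne
    obtain ⟨f, hf, -⟩ := hC.2 i i' j j' hne hp
    exact ⟨some f, fun _ _ _ => ⟨f, rfl, hf⟩⟩
  · exact ⟨none, fun i i' hne => absurd ⟨i, i', hne⟩ h⟩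

theorem hom_partial {f : G.V → H.V} (hf : IsHom G H f) {i k : G.V} (h : i ≠ k) :
    PartialHom2 G H i k (f i) (f k) :=
  fun b => ⟨hf b i k h, hf b k i h.symm⟩

theorem cone_choice (hC : Cond G H) (N : Net G H) {p q : Pt G H} (hp : p ∈ N.D) (hq : q ∈ N.D)
    (C : Pt G H → G.V → Prop) (hpq : ∀ u i, C u i → u = p ∨ u = q)
    (hfun : ∀ u i i', C u i → C u i' → i = i')
    (hred : ∀ u ∈ N.D, ∀ v ∈ N.D, u ≠ v → ∀ i i', C u i → C v i' →
      ∃ j j', N.L u v = .red j j' ∧ i ≠ i' ∧ PartialHom2 G H i i' j j') :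
    ∃ t, Good G H t ∧ ∀ u ∈ N.D, ∀ v ∈ N.D, u ≠ v → ∀ i i', C u i → C v i' →
      ∃ f, t = some f ∧ N.L u v = .red (f i) (f i') := by
  by_cases h : p ≠ q ∧ ∃ i i', C p i ∧ C q i'
  · obtain ⟨hne, i, i', hi, hi'⟩ := h
    obtain ⟨j, j', hL, hii, hph⟩ := hred p hp q hq hne i i' hi hi'
    obtain ⟨f, hf, hfi, hfi'⟩ := hC.2 i i' j j' hii hph
    refine ⟨some f, fun _ _ _ => ⟨f, rfl, hf⟩, ?_⟩
    intro u hu v hv huv k k' hk hk'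
    refine ⟨f, rfl, ?_⟩
    rcases hpq u k hk with rfl | rfl <;> rcases hpq v k' hk' with rfl | rfl
    · exact absurd rfl huv
    · rw [hfun _ _ _ hk hi, hfun _ _ _ hk' hi', hfi, hfi', hL]
    · rw [hfun _ _ _ hk hi', hfun _ _ _ hk' hi, hfi, hfi', N.conv _ hp _ hq, hL]; rfl
    · exact absurd rfl huv
  · obtain ⟨t, ht⟩ := exists_good hC
    refine ⟨t, ht, ?_⟩
    intro u hu v hv huv k k' hk hk'
    exfalso
    apply h
    rcases hpq u k hk with rfl | rfl <;> rcases hpq v k' hk' with rfl | rfl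
    · exact absurd rfl huv
    · exact ⟨huv, k, k', hk, hk'⟩
    · exact ⟨huv.symm, k', k, hk', hk⟩
    · exact absurd rfl huv

def IsGreen {α β : Type} (a : RbAtom α β) : Prop := ∃ i, a = .green i

def RedSpec (N : Net G H) (p q : Pt G H) (α γ : Atm G H) (v : Pt G H) (e : Atm G H) : Prop :=
  ∃ i k f, α = .green i ∧ γ = .yellow ∧ N.L p v = .green k ∧ N.L q v = .yellow ∧
    N.F p q = some f ∧ IsHom G H f ∧ i ≠ k ∧ e = .red (f k) (f i)

def ESpec (N : Net G H) (p q : Pt G H) (α γ : Atm G H) (v : Pt G H) (e : Atm G H) : Prop :=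
  (e = .white ∧ ¬ (IsGreen α ∧ IsGreen (N.L p v)) ∧ ¬ (IsGreen γ ∧ IsGreen (N.L q v))) ∨
  (e = .black ∧ ¬ (α = .yellow ∧ N.L p v = .yellow) ∧ ¬ (γ = .yellow ∧ N.L q v = .yellow)) ∨
  RedSpec N p q α γ v e ∨ RedSpec N q p γ α v e

theorem ESpec.symm {N : Net G H} {p q : Pt G H} {α γ : Atm G H} {v : Pt G H} {e : Atm G H}
    (h : ESpec N p q α γ v e) : ESpec N q p γ α v e := by
  unfold ESpec at *
  tauto

theorem ESpec.ne {N : Net G H} {p q : Pt G H} {α γ : Atm G H} {v : Pt G H} {e : Atm G H}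
    (h : ESpec N p q α γ v e) : e ≠ .id ∧ e ≠ .yellow ∧ ¬ IsGreen e := by
  rcases h with ⟨rfl, -⟩ | ⟨rfl, -⟩ | ⟨i, k, f, -, -, -, -, -, -, -, rfl⟩ |
    ⟨i, k, f, -, -, -, -, -, -, -, rfl⟩ <;> simp [IsGreen]

theorem redSpec_exists (N : Net G H) {p q : Pt G H} {α γ : Atm G H} (hp : p ∈ N.D)
    (hq : q ∈ N.D) {v : Pt G H} (hns : ¬ (N.L p v = α ∧ N.L q v = γ))
    (h1 : IsGreen α ∧ IsGreen (N.L p v)) (h2 : γ = .yellow ∧ N.L q v = .yellow) :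
    ∃ e, RedSpec N p q α γ v e := by
  obtain ⟨⟨i, hi⟩, k, hk⟩ := h1
  have hik : i ≠ k := by
    rintro rfl
    exact hns ⟨hk.trans hi.symm, h2.2.trans h2.1.symm⟩
  obtain ⟨f, hf, hh⟩ := N.good p hp q hq i k hik
  exact ⟨_, i, k, f, hi, h2.1, hk, h2.2, hf, hh, hik, rfl⟩

theorem eSpec_exists (N : Net G H) {p q : Pt G H} {α γ : Atm G H} (hp : p ∈ N.D)
    (hq : q ∈ N.D) {v : Pt G H} (hns : ¬ (N.L p v = α ∧ N.L q v = γ)) :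
    ∃ e, ESpec N p q α γ v e := by
  by_cases hg : (IsGreen α ∧ IsGreen (N.L p v)) ∨ (IsGreen γ ∧ IsGreen (N.L q v))
  · by_cases hy : (α = .yellow ∧ N.L p v = .yellow) ∨ (γ = .yellow ∧ N.L q v = .yellow)
    · rcases hg with hg | hg <;> rcases hy with hy | hy
      · obtain ⟨⟨i, hi⟩, -⟩ := hg
        rw [hy.1] at hi; simp at hi
      · obtain ⟨e, he⟩ := redSpec_exists N hp hq hns hg hy
        exact ⟨e, Or.inr (Or.inr (Or.inl he))⟩
      · obtain ⟨e, he⟩ := redSpec_exists N hq hp (fun h => hns h.symm) hg hy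
        exact ⟨e, Or.inr (Or.inr (Or.inr he))⟩
      · obtain ⟨⟨i, hi⟩, -⟩ := hg
        rw [hy.1] at hi; simp at hi
    · exact ⟨.black, Or.inr (Or.inl ⟨rfl, by tauto, by tauto⟩)⟩
  · exact ⟨.white, Or.inl ⟨rfl, by tauto, by tauto⟩⟩

/-- triangle with base point `p` -/
theorem ESpec.tri {N : Net G H} {p q : Pt G H} {α γ : Atm G H} (hp : p ∈ N.D)
    {v : Pt G H} (hv : v ∈ N.D) (hvp : v ≠ p) (hα : α ≠ .id) {e : Atm G H}
    (h : ESpec N p q α γ v e) : ¬ Forbidden G H α e.conv (N.L p v) := by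
  have hid : N.L p v ≠ .id := fun h => hvp ((N.id_iff p hp v hv).1 h).symm
  rcases h with ⟨rfl, h, -⟩ | ⟨rfl, h, -⟩ | ⟨i, k, f, h1, h2, h3, h4, h5, h6, h7, rfl⟩ |
    ⟨i, k, f, h1, h2, h3, h4, h5, h6, h7, rfl⟩
  · exact ok_white hα hid h
  · exact ok_black hα hid h
  · rw [h1, h3]
    exact ok_grg h7 (hom_partial h6 h7)
  · rw [h2, h4]
    exact ok_yry _ _

theorem RedSpec.tri {N : Net G H} {p q : Pt G H} {α γ : Atm G H} (hp : p ∈ N.D) (hq : q ∈ N.D)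
    {u v : Pt G H} (hu : u ∈ N.D) (hv : v ∈ N.D) (huv : u ≠ v) {e e' : Atm G H}
    (h : RedSpec N p q α γ u e) (h' : RedSpec N p q α γ v e') :
    ¬ Forbidden G H e e'.conv (N.L u v) := by
  obtain ⟨i, k, f, h1, h2, h3, h4, h5, h6, h7, rfl⟩ := h
  obtain ⟨i', k', f', h1', h2', h3', h4', h5', h6', h7', rfl⟩ := h'
  obtain ⟨f2, hf2, hL⟩ := N.cone p hp q hq u hu v hv huv k k' h3 h3' h4 h4'
  rw [h5] at h5' hf2
  injection h5' with e1
  injection hf2 with e2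
  rw [h1] at h1'
  injection h1' with e3
  subst e1 e2 e3
  rw [hL]
  exact ok_rrr _ _ _

theorem RedSpec.clash {N : Net G H} {p q : Pt G H} {α γ : Atm G H}
    {u v : Pt G H} {e e' : Atm G H}
    (h : RedSpec N p q α γ u e) (h' : RedSpec N q p γ α v e') : False := by
  obtain ⟨i, k, f, h1, -⟩ := h
  obtain ⟨i', k', f', -, h1', -⟩ := h'
  rw [h1] at h1'; simp at h1'

theorem forb_swap {N : Net G H} {u v : Pt G H} (hu : u ∈ N.D) (hv : v ∈ N.D) {a b : Atm G H}
    (h : ¬ Forbidden G H a b.conv (N.L u v)) : ¬ Forbidden G H b a.conv (N.L v u) := by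
  intro hf
  have := forb_t3 hf
  rw [conv_conv, ← N.conv v hv u hu] at this
  exact h this

theorem ESpec.tri2 {N : Net G H} {p q : Pt G H} {α γ : Atm G H} (hp : p ∈ N.D) (hq : q ∈ N.D)
    {u v : Pt G H} (hu : u ∈ N.D) (hv : v ∈ N.D) (huv : u ≠ v) {e e' : Atm G H}
    (h : ESpec N p q α γ u e) (h' : ESpec N p q α γ v e') :
    ¬ Forbidden G H e e'.conv (N.L u v) := by
  have key : ∀ {u v : Pt G H}, u ∈ N.D → v ∈ N.D → u ≠ v → ∀ {e e' : Atm G H},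
      ESpec N p q α γ u e → (e' = .white ∨ e' = .black) →
      ¬ Forbidden G H e e'.conv (N.L u v) := by
    intro u v hu hv huv e e' h h'
    have hid : N.L u v ≠ .id := fun h => huv ((N.id_iff u hu v hv).1 h)
    obtain ⟨n1, n2, n3⟩ := h.ne
    rcases h' with rfl | rfl
    · exact ok_white n1 hid (fun h => n3 h.1)
    · exact ok_black n1 hid (fun h => n2 h.1)
  by_cases hw' : e' = .white ∨ e' = .black
  · exact key hu hv huv h hw'
  by_cases hw : e = .white ∨ e = .black
  · exact forb_swap hv hu (key hv hu huv.symm h' hw)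
  have r : RedSpec N p q α γ u e ∨ RedSpec N q p γ α u e := by unfold ESpec at h; tauto
  have r' : RedSpec N p q α γ v e' ∨ RedSpec N q p γ α v e' := by unfold ESpec at h'; tauto
  rcases r with r | r <;> rcases r' with r' | r'
  · exact r.tri hp hq hu hv huv r'
  · exact (r.clash r').elim
  · exact (r'.clash r).elim
  · exact r.tri hq hp hu hv huv r'

theorem ESpec.cone {N : Net G H} {p q : Pt G H} {α γ : Atm G H}
    {u : Pt G H} {e : Atm G H} (h : ESpec N p q α γ u e) {i i' : G.V} (h1 : N.L p u = .green i)
    (h2 : α = .green i') (h3 : N.L q u = .yellow) (h4 : γ = .yellow) :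
    ∃ f, N.F p q = some f ∧ e = .red (f i) (f i') := by
  rcases h with ⟨rfl, h, -⟩ | ⟨rfl, -, h⟩ | ⟨i2, k, f, g1, g2, g3, g4, g5, g6, g7, rfl⟩ |
    ⟨i2, k, f, g1, g2, g3, g4, g5, g6, g7, rfl⟩
  · exact absurd ⟨⟨_, h2⟩, _, h1⟩ h
  · exact absurd ⟨h4, h3⟩ h
  · rw [h2] at g1
    rw [h1] at g3
    injection g1 with e1
    injection g3 with e2
    subst e1 e2
    exact ⟨f, g5, rfl⟩
  · rw [h2] at g2; simp at g2

theorem extend (hC : Cond G H) (N : Net G H) {p q : Pt G H} {α β : Atm G H} (hp : p ∈ N.D)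
    (hq : q ∈ N.D) (hα : α ≠ .id) (hβ : β ≠ .id) (hf : ¬ Forbidden G H α β (N.L p q))
    (hns : ¬ ∃ w ∈ N.D, N.L p w = α ∧ N.L w q = β) :
    ∃ M : Net G H, N ≤ M ∧ ∃ d ∈ M.D, M.L p d = α ∧ M.L d q = β := by
  have hd : PName.node p q α β ∉ N.D := fun h => hns ⟨_, h, (N.name _ _ _ _ h).2.2⟩
  obtain ⟨γ, rfl⟩ : ∃ γ : Atm G H, β = γ.conv := ⟨β.conv, (conv_conv β).symm⟩
  have hγ : γ ≠ .id := by rintro rfl; exact hβ rfl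
  have hns' : ∀ v ∈ N.D, ¬ (N.L p v = α ∧ N.L q v = γ) := by
    rintro v hv ⟨h1, h2⟩
    exact hns ⟨v, hv, h1, by rw [N.conv q hq v hv, h2]⟩
  have hpqe : p = q → α = γ := by
    rintro rfl
    by_contra hne
    rw [(N.id_iff p hp p hp).2 rfl] at hf
    exact hf (forb_id_right (fun h => hne (conv_inj h).symm))
  have hE : ∀ v, ∃ e : Atm G H, v ∈ N.D → (v = p → e = α) ∧ (v = q → e = γ) ∧
      (v ≠ p → v ≠ q → ESpec N p q α γ v e) := by
    intro v
    by_cases hv : v ∈ N.D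
    · by_cases h1 : v = p
      · exact ⟨α, fun _ => ⟨fun _ => rfl, fun h2 => hpqe (h1.symm.trans h2),
          fun h => absurd h1 h⟩⟩
      by_cases h2 : v = q
      · exact ⟨γ, fun _ => ⟨fun h => absurd h h1, fun _ => rfl, fun _ h => absurd h2 h⟩⟩
      obtain ⟨e, he⟩ := eSpec_exists N hp hq (hns' v hv)
      exact ⟨e, fun _ => ⟨fun h => absurd h h1, fun h => absurd h h2, fun _ _ => he⟩⟩
    · exact ⟨.id, fun h => absurd h hv⟩
  choose E hE using hE
  have Ep : E p = α := (hE p hp).1 rfl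
  have Eq : E q = γ := (hE q hq).2.1 rfl
  have ES : ∀ v ∈ N.D, v ≠ p → v ≠ q → ESpec N p q α γ v (E v) := fun v hv => (hE v hv).2.2
  have e1 : ∀ v ∈ N.D, E v ≠ .id := by
    intro v hv
    by_cases h1 : v = p
    · rw [h1, Ep]; exact hα
    by_cases h2 : v = q
    · rw [h2, Eq]; exact hγ
    exact (ES v hv h1 h2).ne.1
  have e4 : ∀ v ∈ N.D, (IsGreen (E v) ∨ E v = .yellow) → v = p ∨ v = q := by
    intro v hv h
    by_contra hcon
    push Not at hcon
    obtain ⟨-, n2, n3⟩ := (ES v hv hcon.1 hcon.2).ne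
    exact h.elim n3 n2
  have e2 : ∀ u ∈ N.D, ∀ v ∈ N.D, ¬ Forbidden G H (E u) (E v).conv (N.L u v) := by
    have pv : ∀ v ∈ N.D, ¬ Forbidden G H (E p) (E v).conv (N.L p v) := by
      intro v hv
      by_cases h1 : v = p
      · rw [h1, (N.id_iff p hp p hp).2 rfl]; exact ok_id_right _
      by_cases h2 : v = q
      · rw [h2, Ep, Eq]; exact hf
      rw [Ep]
      exact (ES v hv h1 h2).tri hp hv h1 hα
    have qv : ∀ v ∈ N.D, ¬ Forbidden G H (E q) (E v).conv (N.L q v) := by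
      intro v hv
      by_cases h2 : v = q
      · rw [h2, (N.id_iff q hq q hq).2 rfl]; exact ok_id_right _
      by_cases h1 : v = p
      · rw [h1]; exact forb_swap hp hq (pv q hq)
      rw [Eq]
      exact (ES v hv h1 h2).symm.tri hq hv h2 hγ
    intro u hu v hv
    by_cases h1 : u = p
    · rw [h1]; exact pv v hv
    by_cases h2 : u = q
    · rw [h2]; exact qv v hv
    by_cases h3 : v = p
    · rw [h3]; exact forb_swap hp hu (pv u hu)
    by_cases h4 : v = q
    · rw [h4]; exact forb_swap hq hu (qv u hu)
    by_cases h5 : u = v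
    · rw [h5, (N.id_iff v hv v hv).2 rfl]; exact ok_id_right _
    exact (ES u hu h1 h2).tri2 hp hq hu hv h5 (ES v hv h3 h4)
  have e3 : ∀ x ∈ N.D, ∀ y ∈ N.D, ∀ u ∈ N.D, ∀ i i', N.L x u = .green i → E x = .green i' →
      N.L y u = .yellow → E y = .yellow → ∃ f, N.F x y = some f ∧ E u = .red (f i) (f i') := by
    intro x hx y hy u hu i i' h1 h2 h3 h4
    have hux : u ≠ x := by
      rintro rfl
      rw [(N.id_iff u hu u hu).2 rfl] at h1; simp at h1
    have huy : u ≠ y := by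
      rintro rfl
      rw [(N.id_iff u hu u hu).2 rfl] at h3; simp at h3
    have hxy : x ≠ y := by
      rintro rfl
      rw [h2] at h4; simp at h4
    rcases e4 x hx (Or.inl ⟨_, h2⟩) with rfl | rfl <;> rcases e4 y hy (Or.inr h4) with rfl | rfl
    · exact absurd rfl hxy
    · exact (ES u hu hux huy).cone h1 (Ep.symm.trans h2) h3 (Eq.symm.trans h4)
    · exact (ES u hu huy hux).symm.cone h1 (Eq.symm.trans h2) h3 (Ep.symm.trans h4)
    · exact absurd rfl hxy
  have yconv : ∀ u ∈ N.D, ∀ v ∈ N.D, N.L u v = .yellow → N.L v u = .yellow := by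
    intro u hu v hv h
    rw [N.conv u hu v hv, h]; rfl
  have gconv : ∀ u ∈ N.D, ∀ v ∈ N.D, ∀ i, N.L u v = .green i → N.L v u = .green i := by
    intro u hu v hv i h
    rw [N.conv u hu v hv, h]; rfl
  have hl : ∀ y, ∃ t, y ∈ N.D → Good G H t ∧ ∀ u ∈ N.D, ∀ v ∈ N.D, u ≠ v → ∀ i i',
      (u ∈ N.D ∧ E u = .green i ∧ N.L y u = .yellow) →
      (v ∈ N.D ∧ E v = .green i' ∧ N.L y v = .yellow) →
      ∃ f, t = some f ∧ N.L u v = .red (f i) (f i') := by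
    intro y
    by_cases hy : y ∈ N.D
    · obtain ⟨t, ht⟩ := cone_choice hC N hp hq
        (fun u i => u ∈ N.D ∧ E u = .green i ∧ N.L y u = .yellow)
        (fun u i h => e4 u h.1 (Or.inl ⟨_, h.2.1⟩))
        (fun u i i' h h' => by
          have := h.2.1.symm.trans h'.2.1
          injection this)
        (by
          rintro u hu v hv huv i i' ⟨-, h1, h2⟩ ⟨-, h3, h4⟩
          have k1 := e2 u hu v hv
          rw [h1, h3] at k1
          have k2 := N.cons u hu y hy v hv
          rw [yconv _ hy _ hu h2, h4] at k2
          exact forced_red (fun h => huv ((N.id_iff u hu v hv).1 h)) k1 k2)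
      exact ⟨t, fun _ => ht⟩
    · exact ⟨none, fun h => absurd h hy⟩
  have hr : ∀ x, ∃ t, x ∈ N.D → Good G H t ∧ ∀ u ∈ N.D, ∀ v ∈ N.D, u ≠ v → ∀ i i',
      (u ∈ N.D ∧ N.L x u = .green i ∧ E u = .yellow) →
      (v ∈ N.D ∧ N.L x v = .green i' ∧ E v = .yellow) →
      ∃ f, t = some f ∧ N.L u v = .red (f i) (f i') := by
    intro x
    by_cases hx : x ∈ N.D
    · obtain ⟨t, ht⟩ := cone_choice hC N hp hq
        (fun u i => u ∈ N.D ∧ N.L x u = .green i ∧ E u = .yellow)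
        (fun u i h => e4 u h.1 (Or.inr h.2.2))
        (fun u i i' h h' => by
          have := h.2.1.symm.trans h'.2.1
          injection this)
        (by
          rintro u hu v hv huv i i' ⟨-, h1, h2⟩ ⟨-, h3, h4⟩
          have k1 := e2 u hu v hv
          rw [h2, h4] at k1
          have k2 := N.cons u hu x hx v hv
          rw [gconv _ hx _ hu _ h1, h3] at k2
          exact forced_red (fun h => huv ((N.id_iff u hu v hv).1 h)) k2 k1)
      exact ⟨t, fun _ => ht⟩
    · exact ⟨none, fun h => absurd h hx⟩
  choose Fl hFl using hl
  choose Fr hFr using hr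
  obtain ⟨F0, hF0⟩ := exists_good hC
  exact one_point N hp hq hd E Fl Fr F0 Ep (by rw [Eq]) e1 e2 e3
    (fun y hy => (hFl y hy).1) (fun x hx => (hFr x hx).1) hF0
    (fun y hy u hu v hv huv i i' h1 h2 h3 h4 =>
      (hFl y hy).2 u hu v hv huv i i' ⟨hu, h1, h3⟩ ⟨hv, h2, h4⟩)
    (fun x hx u hu v hv huv i i' h1 h2 h3 h4 =>
      (hFr x hx).2 u hu v hv huv i i' ⟨hu, h1, h3⟩ ⟨hv, h2, h4⟩)

theorem net_nonempty (hC : Cond G H) : Nonempty (Net G H) := by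
  obtain ⟨t, ht⟩ := exists_good hC
  refine ⟨⟨{.root}, fun _ _ => .id, fun _ _ => t, rfl, ?_, ?_, ?_, ?_, ?_, ?_⟩⟩
  · rintro u rfl v rfl; simp
  · intros; rfl
  · intros; exact ok_id_left _
  · intros; exact ht
  · intro x hx y hy u hu v hv huv i i' h; simp at h
  · intro x y a b h; simp at h

theorem saturated (hC : Cond G H) : ∃ N : Net G H, ∀ p ∈ N.D, ∀ q ∈ N.D, ∀ α β,
    ¬ Forbidden G H α β (N.L p q) → ∃ w ∈ N.D, N.L p w = α ∧ N.L w q = β := by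
  haveI := net_nonempty hC
  obtain ⟨N, hN⟩ := zorn_le_nonempty (α := Net G H) chain_bdd
  refine ⟨N, ?_⟩
  intro p hp q hq α β hf
  by_cases hα : α = .id
  · subst hα
    have : β = N.L p q := by
      by_contra h
      exact hf (forb_id h)
    exact ⟨p, hp, (N.id_iff p hp p hp).2 rfl, this.symm⟩
  by_cases hβ : β = .id
  · subst hβ
    have : α = N.L p q := by
      by_contra h
      exact hf (forb_id_mid h)
    exact ⟨q, hq, this.symm, (N.id_iff q hq q hq).2 rfl⟩
  by_contra hns
  obtain ⟨M, hle, d, hd, h1, h2⟩ := extend hC N hp hq hα hβ hf hns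
  have hge := hN hle
  have hdN := hge.1 hd
  refine hns ⟨d, hdN, ?_, ?_⟩
  · rw [← (hle.2 p hp d hdN).1, h1]
  · rw [← (hle.2 d hdN q hq).1, h2]

theorem forward (hC : Cond G H) : CompletelyRepresentable G H := by
  obtain ⟨N, hN⟩ := saturated hC
  refine ⟨N.D, fun S => {p | N.L p.1 p.2 ∈ S}, ?_, ?_, ?_, ?_, ?_, ?_⟩
  · intro S T h
    ext a
    have hroot : N.L .root .root = .id := (N.id_iff _ N.root_mem _ N.root_mem).2 rfl
    obtain ⟨w, hw, h1, -⟩ := hN _ N.root_mem _ N.root_mem a a.conv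
      (by rw [hroot]; exact ok_id_right a)
    have := Set.ext_iff.1 h (⟨.root, N.root_mem⟩, ⟨w, hw⟩)
    simpa [h1] using this
  · intro S
    ext p
    simp
  · intro A
    ext p
    simp
  · intro A B
    ext ⟨⟨u, hu⟩, ⟨v, hv⟩⟩
    constructor
    · rintro ⟨a, ha, b, hb, hf⟩
      obtain ⟨w, hw, h1, h2⟩ := hN u hu v hv a b hf
      refine ⟨⟨w, hw⟩, ?_, ?_⟩
      · show N.L u w ∈ A
        rw [h1]; exact ha
      · show N.L w v ∈ B
        rw [h2]; exact hb
    · rintro ⟨⟨w, hw⟩, h1, h2⟩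
      exact ⟨N.L u w, h1, N.L w v, h2, N.cons u hu w hw v hv⟩
  · intro A
    ext ⟨⟨u, hu⟩, ⟨v, hv⟩⟩
    show (N.L u v).conv ∈ A ↔ N.L v u ∈ A
    rw [N.conv u hu v hv]
  · ext ⟨⟨u, hu⟩, ⟨v, hv⟩⟩
    show N.L u v = .id ↔ (⟨u, hu⟩ : N.D) = ⟨v, hv⟩
    rw [N.id_iff u hu v hv]
    simp

end ext
end RB

theorem rainbow_completelyRepresentable_iff {σ : Type} (G H : BinStruct σ) :
    ((∀ i i' : G.V, i ≠ i' → ∃ j j' : H.V, PartialHom2 G H i i' j j') ∧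
      (∀ (i i' : G.V) (j j' : H.V), i ≠ i' → PartialHom2 G H i i' j j' →
        ∃ f : G.V → H.V, IsHom G H f ∧ f i = j ∧ f i' = j')) ↔
    CompletelyRepresentable G H := by
  exact ⟨fun h => RB.forward h, fun h => RB.backward h⟩
end

section
/- Let G and H be binary structures. If the rainbow relation algebra B_{G,H} is completely representable, then for all distinct i, i' ∈ G there exist j, j' ∈ H such that {(i,j),(i',j')} is a partial homomorphism from G to H. -/
variable {σ : Type}

theorem completelyRepresentable_partialHom {σ : Type} (G H : BinStruct σ)
    (h : CompletelyRepresentable G H) :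
    ∀ i i' : G.V, i ≠ i' → ∃ j j' : H.V, PartialHom2 G H i i' j j' := by
  obtain ⟨X, θ, inj, hsup, hcompl, hcomp, hconv, -⟩ := h
  intro i i' hne
  have hemp : θ ∅ = ∅ := by simpa using hsup ∅
  have hun : ∀ A B, θ (A ∪ B) = θ A ∪ θ B := by
    intro A B
    simpa [Set.image_pair] using hsup {A, B}
  have hmono : ∀ A B, A ⊆ B → θ A ⊆ θ B := by
    intro A B hAB
    have := hun A B
    rw [Set.union_eq_self_of_subset_left hAB] at this
    rw [this]
    exact Set.subset_union_left
  have hmeet : ∀ A B p, p ∈ θ A → p ∈ θ B → (A ∩ B).Nonempty := by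
    intro A B p hA hB
    rw [Set.nonempty_iff_ne_empty]
    intro he
    have hs : A ⊆ Bᶜ := Set.disjoint_iff_inter_eq_empty.mpr he |>.subset_compl_right
    have := hmono _ _ hs hA
    rw [hcompl] at this
    exact this.2 hB
  have hne' : (θ {RbAtom.black}).Nonempty := by
    rw [Set.nonempty_iff_ne_empty, ← hemp]
    intro e
    exact Set.singleton_ne_empty _ (inj e)
  obtain ⟨⟨x, y⟩, hxy⟩ := hne'
  have hw : ∀ k : G.V, ∃ z, (x, z) ∈ θ {RbAtom.green k} ∧ (z, y) ∈ θ {RbAtom.yellow} := by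
    intro k
    have hs : ({RbAtom.black} : Set (RbAtom G.V H.V)) ⊆
        rbComp G H {RbAtom.green k} {RbAtom.yellow} := by
      rintro _ rfl
      refine ⟨_, rfl, _, rfl, ?_⟩
      rintro ⟨a, b, c, hb, hc⟩
      cases hb <;> simp [RbAtom.conv] at hc
    have := hmono _ _ hs hxy
    rw [hcomp] at this
    exact this
  have hgc : ∀ k : G.V, rbConv ({RbAtom.green k} : Set (RbAtom G.V H.V)) = {RbAtom.green k} := by
    intro k
    ext a
    cases a <;> simp [rbConv, RbAtom.conv]
  have hyc : rbConv ({RbAtom.yellow} : Set (RbAtom G.V H.V)) = {RbAtom.yellow} := by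
    ext a
    cases a <;> simp [rbConv, RbAtom.conv]
  obtain ⟨z, hz1, hz2⟩ := hw i
  obtain ⟨z', hz1', hz2'⟩ := hw i'
  have h1 : (z, z') ∈ θ (rbComp G H {RbAtom.green i} {RbAtom.green i'}) := by
    rw [hcomp]
    refine ⟨x, ?_, hz1'⟩
    rw [← hgc, hconv]
    exact hz1
  have h2 : (z, z') ∈ θ (rbComp G H {RbAtom.yellow} {RbAtom.yellow}) := by
    rw [hcomp]
    refine ⟨y, hz2, ?_⟩
    rw [← hyc, hconv]
    exact hz2'
  obtain ⟨c, ⟨_, rfl, _, rfl, hc1⟩, ⟨_, rfl, _, rfl, hc2⟩⟩ := hmeet _ _ _ h1 h2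
  cases c with
  | id =>
    exact absurd ⟨.id, .green i, .green i', .ident _ _ (by simpa using hne),
      by simp [RbAtom.conv]⟩ hc1
  | black => exact absurd ⟨_, _, _, .yyb, .inl rfl⟩ hc2
  | white => exact absurd ⟨_, _, _, .ggw i i', .inl rfl⟩ hc1
  | yellow => exact absurd ⟨_, _, _, .yyy, .inl rfl⟩ hc2
  | green k => exact absurd ⟨_, _, _, .ggg i i' k, .inl rfl⟩ hc1
  | red j j' =>
    by_contra hcon
    push Not at hcon
    exact hc1 ⟨_, _, _, .ggr i i' j j' (fun hh => hcon j j' hh.2), .inl rfl⟩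
end

section
/- Let G and H be binary structures. If the rainbow relation algebra B_{G,H} is completely representable, then every partial homomorphism {(i,j),(i',j')} with i ≠ i' from G to H extends to a total homomorphism G → H. -/
variable {σ : Type}

section RainbowHelpers

theorem rb_nf_ggr {σ : Type} (G H : BinStruct σ) (i i' : G.V) (j j' : H.V) (hne : i ≠ i')
    (hp : PartialHom2 G H i i' j j') :
    ¬ Forbidden G H (.green i) (.green i') (.red j j') := by
  rintro ⟨x, y, z, hb, h⟩
  have hp' : PartialHom2 G H i' i j' j := fun b => ⟨(hp b).2, (hp b).1⟩
  cases hb <;> simp_all [RbAtom.conv] <;> grind [RbAtom.conv]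

theorem rb_nf_yyr {σ : Type} (G H : BinStruct σ) (j j' : H.V) :
    ¬ Forbidden G H .yellow .yellow (.red j j') := by
  rintro ⟨x, y, z, hb, h⟩
  cases hb <;> simp_all [RbAtom.conv] <;> grind [RbAtom.conv]

theorem rb_nf_gy {σ : Type} (G H : BinStruct σ) (k : G.V) (c : RbAtom G.V H.V)
    (hc : c ≠ .id) : ¬ Forbidden G H (.green k) .yellow c := by
  rintro ⟨x, y, z, hb, h⟩
  cases hb <;> simp_all [RbAtom.conv] <;> grind [RbAtom.conv]

theorem rb_f_gyid {σ : Type} (G H : BinStruct σ) (k : G.V) :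
    Forbidden G H (.green k) .yellow .id :=
  ⟨.id, .yellow, .green k, .ident _ _ (by simp), by simp [RbAtom.conv]⟩

theorem rb_label {σ : Type} (G H : BinStruct σ) (k l : G.V) (hkl : k ≠ l)
    (c : RbAtom G.V H.V) (h1 : ¬ Forbidden G H (.green k) (.green l) c)
    (h2 : ¬ Forbidden G H .yellow .yellow c) :
    ∃ j j', c = .red j j' ∧ PartialHom2 G H k l j j' := by
  cases c with
  | id => exact (h1 ⟨.id, .green l, .green k, .ident _ _ (by simpa using hkl.symm),
      by simp [RbAtom.conv]⟩).elim
  | black => exact (h2 ⟨_, _, _, .yyb, Or.inl rfl⟩).elim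
  | white => exact (h1 ⟨_, _, _, .ggw _ _, Or.inl rfl⟩).elim
  | yellow => exact (h2 ⟨_, _, _, .yyy, Or.inl rfl⟩).elim
  | green m => exact (h1 ⟨_, _, _, .ggg _ _ _, Or.inl rfl⟩).elim
  | red j j' =>
    refine ⟨j, j', rfl, ?_⟩
    by_contra hp
    exact h1 ⟨_, _, _, .ggr _ _ _ _ (fun h => hp h.2), Or.inl rfl⟩

theorem rb_rrr {σ : Type} (G H : BinStruct σ) (a b c d e f : H.V)
    (h : ¬ Forbidden G H (.red a b) (.red c d) (.red e f)) : a = e ∧ b = c ∧ d = f := by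
  by_contra hn
  exact h ⟨_, _, _, .rrr _ _ _ _ _ _ hn, Or.inl rfl⟩

/-- Atom-labelled form of a complete representation. -/
theorem rb_labelling {σ : Type} (G H : BinStruct σ) (h : CompletelyRepresentable G H) :
    ∃ (X : Type) (L : RbAtom G.V H.V → X → X → Prop),
      (∀ a, ∃ x y, L a x y) ∧
      (∀ a x y, L a x y → L a.conv y x) ∧
      (∀ a b x y z, L a x y → L b y z → ∃ c, L c x z ∧ ¬ Forbidden G H a b c) ∧
      (∀ a b x y, L a x y → L b x y → a = b) ∧
      (∀ a b c x z, L c x z → ¬ Forbidden G H a b c → ∃ y, L a x y ∧ L b y z) := by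
  obtain ⟨X, θ, hinj, hsup, hcompl, hcomp, hconv, hid⟩ := h
  have hempty : θ ∅ = ∅ := by simpa using hsup ∅
  have hmem : ∀ A p, p ∈ θ A ↔ ∃ a ∈ A, p ∈ θ {a} := by
    intro A p
    have : A = ⋃₀ ((fun a => ({a} : Set (RbAtom G.V H.V))) '' A) := by
      ext; simp
    conv_lhs => rw [this, hsup]
    simp
  refine ⟨X, fun a x y => (x, y) ∈ θ {a}, ?_, ?_, ?_, ?_, ?_⟩
  · intro a
    by_contra hn
    push Not at hn
    have : θ {a} = θ ∅ := by
      rw [hempty]; ext ⟨x, y⟩; simpa using hn x y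
    exact Set.singleton_ne_empty a (hinj this)
  · intro a x y hxy
    have h1 : rbConv {a.conv} = ({a} : Set (RbAtom G.V H.V)) := by
      ext c; cases c <;> cases a <;> simp [rbConv, RbAtom.conv, and_comm]
    have h2 := hconv {a.conv}
    rw [h1] at h2
    rw [h2] at hxy
    exact hxy
  · intro a b x y z hxy hyz
    have : (x, z) ∈ θ (rbComp G H {a} {b}) := by
      rw [hcomp]; exact ⟨y, hxy, hyz⟩
    obtain ⟨c, hc, hc'⟩ := (hmem _ _).1 this
    obtain ⟨a', rfl, b', rfl, hf⟩ := hc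
    exact ⟨c, hc', hf⟩
  · intro a b x y ha hb
    by_contra hne
    have : (x, y) ∈ θ {a}ᶜ := (hmem _ _).2 ⟨b, by simpa using fun h => hne h.symm, hb⟩
    rw [hcompl] at this
    exact this.2 ha
  · intro a b c x z hc hf
    have : (x, z) ∈ θ (rbComp G H {a} {b}) :=
      (hmem _ _).2 ⟨c, ⟨a, rfl, b, rfl, hf⟩, hc⟩
    rw [hcomp] at this
    exact this

end RainbowHelpers

theorem completelyRepresentable_extends {σ : Type} (G H : BinStruct σ)
    (h : CompletelyRepresentable G H) :
    ∀ (i i' : G.V) (j j' : H.V), i ≠ i' → PartialHom2 G H i i' j j' →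
      ∃ f : G.V → H.V, IsHom G H f ∧ f i = j ∧ f i' = j' := by
  classical
  intro i i' j j' hne hp
  obtain ⟨X, L, hex, hcv, hcomp, huniq, hwit⟩ := rb_labelling G H h
  have htri : ∀ a b c x y z, L a x y → L b y z → L c x z → ¬ Forbidden G H a b c := by
    intro a b c x y z h1 h2 h3
    obtain ⟨c', hc', hf⟩ := hcomp _ _ _ _ _ h1 h2
    rwa [huniq _ _ _ _ h3 hc']
  obtain ⟨u, v, huv⟩ := hex (.red j j')
  obtain ⟨p, hup, hpv⟩ := hwit _ _ _ _ _ huv (rb_nf_ggr G H i i' j j' hne hp)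
  obtain ⟨q, huq, hqv⟩ := hwit _ _ _ _ _ huv (rb_nf_yyr G H j j')
  have hpu : L (.green i) p u := hcv _ _ _ hup
  have hvq : L .yellow v q := hcv _ _ _ hqv
  obtain ⟨c, hpq, hcf⟩ := hcomp _ _ _ _ _ hpu huq
  have hcid : c ≠ .id := by
    rintro rfl
    exact hcf (rb_f_gyid G H i)
  have hz : ∀ k, ∃ z, L (.green k) p z ∧ L .yellow z q ∧ (k = i → z = u) ∧ (k = i' → z = v) := by
    intro k
    by_cases h1 : k = i
    · subst h1
      exact ⟨u, hpu, huq, fun _ => rfl, fun h => (hne h).elim⟩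
    by_cases h2 : k = i'
    · subst h2
      exact ⟨v, hpv, hvq, fun h => (h1 h).elim, fun _ => rfl⟩
    obtain ⟨z, hz1, hz2⟩ := hwit _ _ _ _ _ hpq (rb_nf_gy G H k c hcid)
    exact ⟨z, hz1, hz2, fun h => (h1 h).elim, fun h => (h2 h).elim⟩
  choose z hzp hzq hzu hzv using hz
  have hred : ∀ k l, k ≠ l → ∃ a b, L (.red a b) (z k) (z l) ∧ PartialHom2 G H k l a b := by
    intro k l hkl
    have hkp : L (.green k) (z k) p := hcv _ _ _ (hzp k)
    have hql : L .yellow q (z l) := hcv _ _ _ (hzq l)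
    obtain ⟨d, hd, hdf⟩ := hcomp _ _ _ _ _ hkp (hzp l)
    obtain ⟨a, b, rfl, hab⟩ := rb_label G H k l hkl d hdf (htri _ _ _ _ _ _ (hzq k) hql hd)
    exact ⟨a, b, hd, hab⟩
  have hii' : L (.red j j') (z i) (z i') := by rw [hzu i rfl, hzv i' rfl]; exact huv
  -- labels from `z i` have first index `j`
  have hfst : ∀ l, l ≠ i → ∃ b, L (.red j b) (z i) (z l) := by
    intro l hl
    by_cases h2 : l = i'
    · exact ⟨j', h2 ▸ hii'⟩
    obtain ⟨a, b, hab, _⟩ := hred i l hl.symm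
    obtain ⟨a', b', hab', _⟩ := hred i' l (Ne.symm h2)
    obtain ⟨rfl, -, -⟩ := rb_rrr G H _ _ _ _ _ _ (htri _ _ _ _ _ _ hii' hab' hab)
    exact ⟨b, hab⟩
  haveI : Nonempty H.V := ⟨j⟩
  choose! g hg using hfst
  refine ⟨fun k => if k = i then j else g k, ?_, by simp, ?_⟩
  · intro b k l hkl hrel
    obtain ⟨a, a', haa, hph⟩ := hred k l hkl
    have key : a = (if k = i then j else g k) ∧ a' = (if l = i then j else g l) := by
      by_cases hk : k = i
      · have hl : l ≠ i := fun h => hkl (hk.trans h.symm)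
        subst hk
        have := huniq _ _ _ _ haa (hg l hl)
        simp_all
      · by_cases hl : l = i
        · subst hl
          have h3 : L (.red a' a) (z l) (z k) := hcv _ _ _ haa
          have := huniq _ _ _ _ h3 (hg k hk)
          simp_all
        · have := rb_rrr G H _ _ _ _ _ _ (htri _ _ _ _ _ _ (hg k hk) haa (hg l hl))
          simp_all
    have := (hph b).1 hrel
    rw [key.1, key.2] at this
    exact this
  · have := huniq _ _ _ _ hii' (hg i' hne.symm)
    simp only [RbAtom.red.injEq, true_and] at this
    simp [hne.symm, this]
end

section
/- Let G, H, F be binary structures, let c < ω, and let (α,β) be a position arrived at in the pebble game Γ^c_n(B_{G,F}, B_{H,F}) during which ∃ plays using the mirroring strategy induced by a winning strategy in the parallel colouring game G^{c+3}_ω(G,H). Then for every relation-algebra term t whose variables are indexed by the common domain of α and β, the sets of non-green atoms below t^α (in B_{G,F}) and below t^β (in B_{H,F}) are identical. -/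
variable {σ : Type}

/-! ### Consequences of a position not being a win -/

lemma colWin_symm {σ : Type} {G H : BinStruct σ} {c : ℕ} {g : Fin c → Set G.V}
    {h : Fin c → Set H.V} (hw : ColWin H G c h g) : ColWin G H c g h := by
  rcases hw with ⟨π, hπ⟩ | ⟨π, π', b, hπ⟩
  · exact Or.inl ⟨π, hπ.symm⟩
  · exact Or.inr ⟨π, π', b, hπ.symm⟩

lemma colInvariant_symm {σ : Type} {G H : BinStruct σ} {c : ℕ}
    {Inv : (Fin c → Set G.V) → (Fin c → Set H.V) → Prop} (hI : IsColInvariant G H c Inv) :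
    IsColInvariant H G c (fun h g => Inv g h) := by
  obtain ⟨h1, h2, h3, h4⟩ := hI
  exact ⟨h1, fun h g hh hw => h2 g h hh (colWin_symm hw), fun h g hh => h4 g h hh,
    fun h g hh => h3 g h hh⟩

lemma exists_samePalette {σ : Type} {G H : BinStruct σ} {c : ℕ} {g : Fin c → Set G.V}
    {h : Fin c → Set H.V} (hw : ¬ ColWin G H c g h) (x : G.V) :
    ∃ y : H.V, ∀ t, x ∈ g t ↔ y ∈ h t := by
  by_contra hcon
  apply hw
  refine Or.inl ⟨{t | x ∈ g t}, Or.inr ⟨?_, ?_⟩⟩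
  · ext y
    simp only [PaletteSet, Set.mem_setOf_eq, Set.mem_empty_iff_false, iff_false]
    intro hy
    exact hcon ⟨y, fun t => (hy t).symm⟩
  · intro he
    have : x ∈ PaletteSet g {t | x ∈ g t} := fun t => Iff.rfl
    rw [he] at this
    exact this

lemma rel_transfer {σ : Type} {G H : BinStruct σ} {c : ℕ} {g : Fin c → Set G.V}
    {h : Fin c → Set H.V} (hw : ¬ ColWin G H c g h) {m n : Fin c} {i k : G.V} {i' k' : H.V}
    (gm : g m = {i}) (hm : h m = {i'}) (gn : g n = {k}) (hn : h n = {k'}) (b : σ)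
    (hr : G.rel b i k) : H.rel b i' k' := by
  by_contra hcon
  apply hw
  refine Or.inr ⟨{t | i ∈ g t}, {t | k ∈ g t}, b, Or.inr ⟨?_, ?_⟩⟩
  · ext ⟨u, v⟩
    simp only [Set.mem_inter_iff, Set.mem_prod, Set.mem_setOf_eq, Set.mem_empty_iff_false,
      iff_false]
    rintro ⟨⟨hu, hv⟩, huv⟩
    have h1 : u ∈ h m := (hu m).2 (by simp [gm])
    have h2 : v ∈ h n := (hv n).2 (by simp [gn])
    rw [hm] at h1
    rw [hn] at h2
    obtain rfl : u = i' := h1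
    obtain rfl : v = k' := h2
    exact hcon huv
  · intro he
    have : (i, k) ∈ (PaletteSet g {t | i ∈ g t} ×ˢ PaletteSet g {t | k ∈ g t}) ∩
        {q | G.rel b q.1 q.2} := ⟨⟨fun t => Iff.rfl, fun t => Iff.rfl⟩, hr⟩
    rw [he] at this
    exact this

lemma palette_singletons {σ : Type} {G H : BinStruct σ} {c : ℕ} {g : Fin c → Set G.V}
    {h : Fin c → Set H.V} (hw : ¬ ColWin G H c g h) {m : Fin c} {i : G.V} {i' : H.V}
    (gm : g m = {i}) (hm : h m = {i'}) (t : Fin c) : i ∈ g t ↔ i' ∈ h t := by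
  obtain ⟨y, hy⟩ := exists_samePalette hw i
  have h1 : y ∈ h m := (hy m).1 (by simp [gm])
  rw [hm] at h1
  obtain rfl : y = i' := h1
  exact hy t

/-- The response to a singleton is a singleton. -/
lemma response_singleton {σ : Type} {G H : BinStruct σ} {c : ℕ}
    {Inv : (Fin (c + 3) → Set G.V) → (Fin (c + 3) → Set H.V) → Prop}
    (hI : IsColInvariant G H (c + 3) Inv) {g : Fin (c + 3) → Set G.V}
    {h : Fin (c + 3) → Set H.V} (hgh : Inv g h) {m : Fin (c + 3)} {i : G.V} (gm : g m = {i}) :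
    ∃ i', h m = {i'} := by
  obtain ⟨y, hy⟩ := exists_samePalette (hI.2.1 g h hgh) i
  have hym : y ∈ h m := (hy m).1 (by simp [gm])
  refine ⟨y, Set.eq_singleton_iff_unique_mem.2 ⟨hym, fun z hz => ?_⟩⟩
  by_contra hzy
  obtain ⟨n, hn⟩ := exists_ne m
  obtain ⟨S, hS⟩ := hI.2.2.2 g h hgh n {y}
  have hw := fun w => hI.2.1 _ _ hS (colWin_symm w)
  obtain ⟨x1, hx1⟩ := exists_samePalette hw y
  obtain ⟨x2, hx2⟩ := exists_samePalette hw z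
  have a1 := hx1 m
  have a2 := hx2 m
  have b1 := hx1 n
  have b2 := hx2 n
  simp only [Function.update_self, Function.update_of_ne hn.symm, gm,
    Set.mem_singleton_iff] at a1 a2 b1 b2
  have e1 := a1.1 hym
  have e2 := a2.1 hz
  subst e1
  subst e2
  exact hzy (b2.2 (b1.1 trivial))

/-! ### Transfer of forbidden triples -/

/-- `{(i,i'),(k,k')}` preserves and reflects equality and all predicates. -/
def PairIso {σ : Type} (G H : BinStruct σ) (i k : G.V) (i' k' : H.V) : Prop :=
  (i = k ↔ i' = k') ∧ ∀ b, (G.rel b i k ↔ H.rel b i' k') ∧ (G.rel b k i ↔ H.rel b k' i')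

/-- Atoms related by the identity on non-green atoms and by `E` on green subscripts. -/
inductive AtomRel {V W F : Type} (E : V → W → Prop) : RbAtom V F → RbAtom W F → Prop
  | id : AtomRel E .id .id
  | black : AtomRel E .black .black
  | white : AtomRel E .white .white
  | yellow : AtomRel E .yellow .yellow
  | red (j j' : F) : AtomRel E (.red j j') (.red j j')
  | green (i : V) (i' : W) : E i i' → AtomRel E (.green i) (.green i')

lemma AtomRel.conv {V W F : Type} {E : V → W → Prop} {a : RbAtom V F} {a' : RbAtom W F}
    (h : AtomRel E a a') : AtomRel E a.conv a'.conv := by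
  cases h <;> constructor
  assumption

lemma AtomRel.flip {V W F : Type} {E : V → W → Prop} {a : RbAtom V F} {a' : RbAtom W F}
    (h : AtomRel E a a') : AtomRel (fun y x => E x y) a' a := by
  cases h <;> constructor
  assumption

/-- Related pairs of atoms. -/
def PairOK {σ : Type} (G H F : BinStruct σ) (a b : RbAtom G.V F.V) (a' b' : RbAtom H.V F.V) :
    Prop :=
  ∀ i k i' k', a = .green i → b = .green k → a' = .green i' → b' = .green k' →
    PairIso G H i k i' k'

lemma PairOK.swap {σ : Type} {G H F : BinStruct σ} {a b : RbAtom G.V F.V}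
    {a' b' : RbAtom H.V F.V} (h : PairOK G H F a b a' b') : PairOK G H F b a b' a' := by
  intro i k i' k' h1 h2 h3 h4
  obtain ⟨e, r⟩ := h k i k' i' h2 h1 h4 h3
  exact ⟨by rw [eq_comm, e, eq_comm], fun b => (r b).symm⟩

lemma conv_eq_green {V F : Type} {a : RbAtom V F} {i : V} : a.conv = .green i ↔ a = .green i := by
  cases a <;> simp [RbAtom.conv]

lemma atom_conv_conv {V F : Type} (a : RbAtom V F) : a.conv.conv = a := by
  cases a <;> simp [RbAtom.conv]

lemma PairOK.convl {σ : Type} {G H F : BinStruct σ} {a b : RbAtom G.V F.V}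
    {a' b' : RbAtom H.V F.V} (h : PairOK G H F a b a' b') :
    PairOK G H F a.conv b a'.conv b' := by
  intro i k i' k' h1 h2 h3 h4
  exact h i k i' k' (conv_eq_green.1 h1) h2 (conv_eq_green.1 h3) h4

lemma PairOK.convr {σ : Type} {G H F : BinStruct σ} {a b : RbAtom G.V F.V}
    {a' b' : RbAtom H.V F.V} (h : PairOK G H F a b a' b') :
    PairOK G H F a b.conv a' b'.conv := h.swap.convl.swap

/-- Related triples of atoms. -/
structure TripleOK {σ : Type} (G H F : BinStruct σ) (E : G.V → H.V → Prop)
    (a b c : RbAtom G.V F.V) (a' b' c' : RbAtom H.V F.V) : Prop where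
  ha : AtomRel E a a'
  hb : AtomRel E b b'
  hc : AtomRel E c c'
  hab : PairOK G H F a b a' b'
  hbc : PairOK G H F b c b' c'
  hac : PairOK G H F a c a' c'

lemma baseForbidden_transfer {σ : Type} {G H F : BinStruct σ} {E : G.V → H.V → Prop}
    {a b c : RbAtom G.V F.V} {a' b' c' : RbAtom H.V F.V} (h : TripleOK G H F E a b c a' b' c')
    (hf : BaseForbidden H F a' b' c') : BaseForbidden G F a b c := by
  obtain ⟨ha, hb, hc, hab, hbc, hac⟩ := h
  cases hf with
  | ident _ _ hne =>
    cases ha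
    apply BaseForbidden.ident
    rintro rfl
    apply hne
    cases hb <;> cases hc <;> try rfl
    rename_i i i' _ i'' _
    rw [(hbc i i i' i'' rfl rfl rfl rfl).1.1 rfl]
  | ggg => cases ha; cases hb; cases hc; constructor
  | ggw => cases ha; cases hb; cases hc; constructor
  | yyy => cases ha; cases hb; cases hc; constructor
  | yyb => cases ha; cases hb; cases hc; constructor
  | rrr _ _ _ _ _ _ hn => cases ha; cases hb; cases hc; constructor; exact hn
  | ggr i' k' j j' hn =>
    cases ha with
    | green i _ hi =>
    cases hb with
    | green k _ hk =>
    cases hc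
    constructor
    rintro ⟨hne, hp⟩
    obtain ⟨e, r⟩ := hab i k i' k' rfl rfl rfl rfl
    exact hn ⟨fun h => hne (e.2 h), fun b =>
      ⟨fun h => (hp b).1 ((r b).1.2 h), fun h => (hp b).2 ((r b).2.2 h)⟩⟩

lemma forbidden_transfer {σ : Type} {G H F : BinStruct σ} {E : G.V → H.V → Prop}
    {a b c : RbAtom G.V F.V} {a' b' c' : RbAtom H.V F.V} (h : TripleOK G H F E a b c a' b' c')
    (hf : Forbidden H F a' b' c') : Forbidden G F a b c := by
  obtain ⟨ha, hb, hc, hab, hbc, hac⟩ := h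
  obtain ⟨x, y, z, hx, h | h | h | h | h | h⟩ := hf <;>
    simp only [Prod.mk.injEq] at h <;> obtain ⟨rfl, rfl, rfl⟩ := h
  · exact ⟨a, b, c, baseForbidden_transfer ⟨ha, hb, hc, hab, hbc, hac⟩ hx, by simp⟩
  · refine ⟨a.conv, c, b, baseForbidden_transfer (a' := x) (E := E) ⟨?_, hc, hb, ?_, hbc.swap, ?_⟩ hx,
      by simp [atom_conv_conv]⟩
    · simpa [atom_conv_conv] using ha.conv
    · simpa [atom_conv_conv] using hac.convl
    · simpa [atom_conv_conv] using hab.convl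
  · refine ⟨c, b.conv, a, baseForbidden_transfer (b' := y) (E := E) ⟨hc, ?_, ha, ?_, ?_, hac.swap⟩ hx,
      by simp [atom_conv_conv]⟩
    · simpa [atom_conv_conv] using hb.conv
    · simpa [atom_conv_conv] using hbc.swap.convr
    · simpa [atom_conv_conv] using hab.swap.convl
  · refine ⟨b.conv, a.conv, c.conv, baseForbidden_transfer (a' := x) (b' := y) (c' := z) (E := E)
      ⟨?_, ?_, ?_, ?_, ?_, ?_⟩ hx, by simp [atom_conv_conv]⟩
    · simpa [atom_conv_conv] using hb.conv
    · simpa [atom_conv_conv] using ha.conv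
    · simpa [atom_conv_conv] using hc.conv
    · simpa [atom_conv_conv] using hab.swap.convl.convr
    · simpa [atom_conv_conv] using hac.convl.convr
    · simpa [atom_conv_conv] using hbc.convl.convr
  · refine ⟨c.conv, a, b.conv, baseForbidden_transfer (a' := x) (c' := z) (E := E)
      ⟨?_, ha, ?_, ?_, ?_, ?_⟩ hx, by simp [atom_conv_conv]⟩
    · simpa [atom_conv_conv] using hc.conv
    · simpa [atom_conv_conv] using hb.conv
    · simpa [atom_conv_conv] using hac.swap.convl
    · simpa [atom_conv_conv] using hab.convr
    · simpa [atom_conv_conv] using hbc.swap.convl.convr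
  · refine ⟨b, c.conv, a.conv, baseForbidden_transfer (b' := y) (c' := z) (E := E)
      ⟨hb, ?_, ?_, ?_, ?_, ?_⟩ hx, by simp [atom_conv_conv]⟩
    · simpa [atom_conv_conv] using hc.conv
    · simpa [atom_conv_conv] using ha.conv
    · simpa [atom_conv_conv] using hbc.convr
    · simpa [atom_conv_conv] using hac.swap.convl.convr
    · simpa [atom_conv_conv] using hab.swap.convr

/-! ### Back-and-forth systems -/

/-- One direction of a back-and-forth system. -/
structure Forth {σ : Type} (G H : BinStruct σ) (E : G.V → H.V → Prop) : Prop where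
  zero : ∀ i, ∃ i', E i i'
  one : ∀ k k', E k k' → ∀ i, ∃ i', E i i' ∧ PairIso G H i k i' k'

lemma pairOK_left {σ : Type} {G H F : BinStruct σ} {a b : RbAtom G.V F.V}
    {a' b' : RbAtom H.V F.V} (h : ∀ i, a ≠ .green i) : PairOK G H F a b a' b' :=
  fun i _ _ _ h1 => absurd h1 (h i)

lemma pairOK_right {σ : Type} {G H F : BinStruct σ} {a b : RbAtom G.V F.V}
    {a' b' : RbAtom H.V F.V} (h : ∀ i, b ≠ .green i) : PairOK G H F a b a' b' :=
  fun _ k _ _ _ h1 => absurd h1 (h k)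

lemma atomRel_exists {σ : Type} {G H F : BinStruct σ} {E : G.V → H.V → Prop}
    (hE : Forth G H E) (a : RbAtom G.V F.V) : ∃ a' : RbAtom H.V F.V, AtomRel E a a' := by
  cases a with
  | green i =>
    obtain ⟨i', hi⟩ := hE.zero i
    exact ⟨_, .green _ _ hi⟩
  | red j j' => exact ⟨_, .red j j'⟩
  | id => exact ⟨_, .id⟩
  | black => exact ⟨_, .black⟩
  | white => exact ⟨_, .white⟩
  | yellow => exact ⟨_, .yellow⟩

lemma atomRel_extend {σ : Type} {G H F : BinStruct σ} {E : G.V → H.V → Prop}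
    (hE : Forth G H E) {b : RbAtom G.V F.V} {b' : RbAtom H.V F.V} (hb : AtomRel E b b')
    (a : RbAtom G.V F.V) : ∃ a' : RbAtom H.V F.V, AtomRel E a a' ∧ PairOK G H F a b a' b' := by
  by_cases h : ∃ k, b = .green k
  · obtain ⟨k, rfl⟩ := h
    by_cases h' : ∃ i, a = .green i
    · obtain ⟨i, rfl⟩ := h'
      cases hb with
      | green _ k' hk =>
      obtain ⟨i', hi, hp⟩ := hE.one k k' hk i
      refine ⟨_, .green _ _ hi, ?_⟩
      rintro _ _ _ _ ⟨⟩ ⟨⟩ ⟨⟩ ⟨⟩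
      exact hp
    · obtain ⟨a', ha⟩ := atomRel_exists hE a
      exact ⟨a', ha, pairOK_left fun i hi => h' ⟨i, hi⟩⟩
  · obtain ⟨a', ha⟩ := atomRel_exists hE a
    exact ⟨a', ha, pairOK_right fun i hi => h ⟨i, hi⟩⟩

lemma triple_exists {σ : Type} {G H F : BinStruct σ} {E : G.V → H.V → Prop}
    (hE : Forth G H E) {a b c : RbAtom G.V F.V} {c' : RbAtom H.V F.V} (hc : AtomRel E c c')
    (hn : ¬ Forbidden G F a b c) : ∃ a' b', TripleOK G H F E a b c a' b' c' := by
  by_cases hga : ∃ i, a = .green i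
  · by_cases hgb : ∃ i, b = .green i
    · by_cases hgc : ∃ i, c = .green i
      · obtain ⟨i, rfl⟩ := hga
        obtain ⟨k, rfl⟩ := hgb
        obtain ⟨l, rfl⟩ := hgc
        exact absurd ⟨_, _, _, .ggg i k l, Or.inl rfl⟩ hn
      · have hgc' : ∀ i, c ≠ .green i := fun i hi => hgc ⟨i, hi⟩
        obtain ⟨b', hb⟩ := atomRel_exists hE b
        obtain ⟨a', ha, hab⟩ := atomRel_extend hE hb a
        exact ⟨a', b', ha, hb, hc, hab, pairOK_right hgc', pairOK_right hgc'⟩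
    · have hgb' : ∀ i, b ≠ .green i := fun i hi => hgb ⟨i, hi⟩
      obtain ⟨b', hb⟩ := atomRel_exists hE b
      obtain ⟨a', ha, hac⟩ := atomRel_extend hE hc a
      exact ⟨a', b', ha, hb, hc, pairOK_right hgb', pairOK_left hgb', hac⟩
  · have hga' : ∀ i, a ≠ .green i := fun i hi => hga ⟨i, hi⟩
    obtain ⟨a', ha⟩ := atomRel_exists hE a
    obtain ⟨b', hb, hbc⟩ := atomRel_extend hE hc b
    exact ⟨a', b', ha, hb, hc, pairOK_left hga', hbc, pairOK_left hga'⟩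

/-- Elements of the two algebras that agree on related atoms. -/
def Agree {V W F : Type} (E : V → W → Prop) (X : Set (RbAtom V F)) (Y : Set (RbAtom W F)) : Prop :=
  ∀ a a', AtomRel E a a' → (a ∈ X ↔ a' ∈ Y)

lemma Agree.flip {V W F : Type} {E : V → W → Prop} {X : Set (RbAtom V F)}
    {Y : Set (RbAtom W F)} (h : Agree E X Y) : Agree (fun y x => E x y) Y X :=
  fun a a' ha => (h a' a ha.flip).symm

lemma comp_forth {σ : Type} {G H F : BinStruct σ} {E : G.V → H.V → Prop}
    (hE : Forth G H E) {X Y : Set (RbAtom G.V F.V)} {X' Y' : Set (RbAtom H.V F.V)}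
    (hX : Agree E X X') (hY : Agree E Y Y') {c : RbAtom G.V F.V} {c' : RbAtom H.V F.V}
    (hc : AtomRel E c c') (h : c ∈ rbComp G F X Y) : c' ∈ rbComp H F X' Y' := by
  obtain ⟨a, ha, b, hb, hn⟩ := h
  obtain ⟨a', b', ht⟩ := triple_exists hE hc hn
  exact ⟨a', (hX _ _ ht.ha).1 ha, b', (hY _ _ ht.hb).1 hb, fun hf => hn (forbidden_transfer ht hf)⟩

lemma term_agree {σ : Type} {G H F : BinStruct σ} {c : ℕ} {E : G.V → H.V → Prop}
    (hE : Forth G H E) (hE' : Forth H G (fun y x => E x y))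
    {α : Fin c → Option (Set (RbAtom G.V F.V))} {β : Fin c → Option (Set (RbAtom H.V F.V))}
    (hv : ∀ i A B, α i = some A → β i = some B → Agree E A B) (t : RATerm c) :
    ∀ X Y, t.evalo (rbOps G F) α = some X → t.evalo (rbOps H F) β = some Y → Agree E X Y := by
  induction t with
  | var i => exact hv i
  | bot =>
    rintro X Y ⟨⟩ ⟨⟩ a a' _
    simp [rbOps]
  | top =>
    rintro X Y ⟨⟩ ⟨⟩ a a' _
    simp [rbOps]
  | one' =>
    rintro X Y ⟨⟩ ⟨⟩ a a' h
    cases h <;> simp [rbOps]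
  | sup s t ihs iht =>
    intro X Y hX hY a a' h
    simp only [RATerm.evalo, Option.bind_eq_some_iff, Option.map_eq_some_iff] at hX hY
    obtain ⟨A, hA, B, hB, rfl⟩ := hX
    obtain ⟨A', hA', B', hB', rfl⟩ := hY
    exact or_congr (ihs A A' hA hA' a a' h) (iht B B' hB hB' a a' h)
  | inf s t ihs iht =>
    intro X Y hX hY a a' h
    simp only [RATerm.evalo, Option.bind_eq_some_iff, Option.map_eq_some_iff] at hX hY
    obtain ⟨A, hA, B, hB, rfl⟩ := hX
    obtain ⟨A', hA', B', hB', rfl⟩ := hY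
    exact and_congr (ihs A A' hA hA' a a' h) (iht B B' hB hB' a a' h)
  | compl t iht =>
    intro X Y hX hY a a' h
    simp only [RATerm.evalo, Option.map_eq_some_iff] at hX hY
    obtain ⟨A, hA, rfl⟩ := hX
    obtain ⟨A', hA', rfl⟩ := hY
    exact not_congr (iht A A' hA hA' a a' h)
  | comp s t ihs iht =>
    intro X Y hX hY a a' h
    simp only [RATerm.evalo, Option.bind_eq_some_iff, Option.map_eq_some_iff] at hX hY
    obtain ⟨A, hA, B, hB, rfl⟩ := hX
    obtain ⟨A', hA', B', hB', rfl⟩ := hY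
    have h1 := ihs A A' hA hA'
    have h2 := iht B B' hB hB'
    exact ⟨comp_forth hE h1 h2 h, comp_forth hE' h1.flip h2.flip h.flip⟩
  | conv t iht =>
    intro X Y hX hY a a' h
    simp only [RATerm.evalo, Option.map_eq_some_iff] at hX hY
    obtain ⟨A, hA, rfl⟩ := hX
    obtain ⟨A', hA', rfl⟩ := hY
    exact iht A A' hA hA' _ _ h.conv

/-! ### The back-and-forth system of a winning strategy -/

/-- Points that can be simultaneously singled out by a spare colour, keeping the first
`c` colours fixed. -/
def PointRel {σ : Type} {G H : BinStruct σ} {c : ℕ}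
    (Inv : (Fin (c + 3) → Set G.V) → (Fin (c + 3) → Set H.V) → Prop)
    (g₀ : Fin (c + 3) → Set G.V) (h₀ : Fin (c + 3) → Set H.V) (k : G.V) (k' : H.V) : Prop :=
  ∃ g h, Inv g h ∧ (∀ t : Fin c, g (liftCol t) = g₀ (liftCol t)) ∧
    (∀ t : Fin c, h (liftCol t) = h₀ (liftCol t)) ∧
    ∃ m : Fin (c + 3), c ≤ m.val ∧ g m = {k} ∧ h m = {k'}

lemma liftCol_ne {c : ℕ} (t : Fin c) {m : Fin (c + 3)} (hm : c ≤ m.val) : liftCol t ≠ m := by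
  rintro rfl
  have := t.isLt
  simp [liftCol] at hm
  omega

lemma pairIso_of_singletons {σ : Type} {G H : BinStruct σ} {c : ℕ} {g : Fin c → Set G.V}
    {h : Fin c → Set H.V} (hw : ¬ ColWin G H c g h) {m n : Fin c} {i k : G.V} {i' k' : H.V}
    (gm : g m = {i}) (hm : h m = {i'}) (gn : g n = {k}) (hn : h n = {k'}) :
    PairIso G H i k i' k' := by
  have hw' : ¬ ColWin H G c h g := fun w => hw (colWin_symm w)
  refine ⟨?_, fun b => ⟨⟨rel_transfer hw gm hm gn hn b, rel_transfer hw' hm gm hn gn b⟩,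
    ⟨rel_transfer hw gn hn gm hm b, rel_transfer hw' hn gn hm gm b⟩⟩⟩
  have := palette_singletons hw gm hm n
  rw [gn, hn] at this
  exact this

lemma colour_point {σ : Type} {G H : BinStruct σ} {c : ℕ}
    {Inv : (Fin (c + 3) → Set G.V) → (Fin (c + 3) → Set H.V) → Prop}
    (hI : IsColInvariant G H (c + 3) Inv) {g : Fin (c + 3) → Set G.V}
    {h : Fin (c + 3) → Set H.V} (hgh : Inv g h) (m : Fin (c + 3)) (i : G.V) :
    ∃ i', Inv (Function.update g m {i}) (Function.update h m {i'}) := by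
  obtain ⟨T, hT⟩ := hI.2.2.1 g h hgh m {i}
  obtain ⟨i', hi⟩ := response_singleton hI hT (m := m) (i := i) (by simp)
  rw [Function.update_self] at hi
  exact ⟨i', hi ▸ hT⟩

lemma pointRel_forth {σ : Type} {G H : BinStruct σ} {c : ℕ}
    {Inv : (Fin (c + 3) → Set G.V) → (Fin (c + 3) → Set H.V) → Prop}
    (hI : IsColInvariant G H (c + 3) Inv) {g₀ : Fin (c + 3) → Set G.V}
    {h₀ : Fin (c + 3) → Set H.V} (h0 : Inv g₀ h₀) : Forth G H (PointRel Inv g₀ h₀) := by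
  constructor
  · intro i
    let m : Fin (c + 3) := ⟨c, by omega⟩
    have hm : c ≤ m.val := le_refl _
    obtain ⟨i', hi⟩ := colour_point hI h0 m i
    exact ⟨i', _, _, hi, fun t => Function.update_of_ne (liftCol_ne t hm) _ _,
      fun t => Function.update_of_ne (liftCol_ne t hm) _ _, m, hm, by simp, by simp⟩
  · rintro k k' ⟨g, h, hgh, hg, hh, m, hm, gm, hm'⟩ i
    obtain ⟨n, hn, hnm⟩ : ∃ n : Fin (c + 3), c ≤ n.val ∧ n ≠ m := by
      by_cases e : m.val = c
      · exact ⟨⟨c + 1, by omega⟩, by simp, fun h => by simp [← h] at e⟩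
      · exact ⟨⟨c, by omega⟩, by simp, fun h => by simp [← h] at e⟩
    obtain ⟨i', hi⟩ := colour_point hI hgh n i
    refine ⟨i', ⟨_, _, hi, fun t => ?_, fun t => ?_, n, hn, by simp, by simp⟩, ?_⟩
    · rw [Function.update_of_ne (liftCol_ne t hn), hg]
    · rw [Function.update_of_ne (liftCol_ne t hn), hh]
    · exact pairIso_of_singletons (hI.2.1 _ _ hi) (m := n) (n := m) (by simp) (by simp)
        (by rw [Function.update_of_ne hnm.symm, gm]) (by rw [Function.update_of_ne hnm.symm, hm'])

lemma pointRel_back {σ : Type} {G H : BinStruct σ} {c : ℕ}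
    {Inv : (Fin (c + 3) → Set G.V) → (Fin (c + 3) → Set H.V) → Prop}
    (hI : IsColInvariant G H (c + 3) Inv) {g₀ : Fin (c + 3) → Set G.V}
    {h₀ : Fin (c + 3) → Set H.V} (h0 : Inv g₀ h₀) :
    Forth H G (fun y x => PointRel Inv g₀ h₀ x y) := by
  have key := pointRel_forth (colInvariant_symm hI) (g₀ := h₀) (h₀ := g₀) h0
  have e : (fun y x => PointRel Inv g₀ h₀ x y) = PointRel (fun h g => Inv g h) h₀ g₀ := by
    funext y x
    apply propext
    constructor
    · rintro ⟨g, h, a, b, c, m, d, e, f⟩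
      exact ⟨h, g, a, c, b, m, d, f, e⟩
    · rintro ⟨g, h, a, b, c, m, d, e, f⟩
      exact ⟨h, g, a, c, b, m, d, f, e⟩
  rw [e]
  exact key

/-- The two elements have the same non-green atoms. -/
def SameNonGreen {V W F : Type} (A : Set (RbAtom V F)) (B : Set (RbAtom W F)) : Prop :=
  Agree (fun _ _ => False) A B

lemma mirrorElt_sameNonGreen {V W F : Type} (x : Set (RbAtom V F)) (Y : Set W) :
    SameNonGreen x (mirrorElt x Y) := by
  intro a a' h
  cases h <;> first | exact Iff.rfl | contradiction

lemma greenPart_mirrorElt {V W F : Type} (x : Set (RbAtom V F)) (Y : Set W) :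
    greenPart (mirrorElt x Y) = Y := rfl

lemma liftCol_injective {c : ℕ} : Function.Injective (liftCol (c := c)) := by
  intro a b h
  simpa [liftCol] using h

lemma mirror_invariant {σ : Type} {G H F : BinStruct σ} {c : ℕ}
    {Inv : (Fin (c + 3) → Set G.V) → (Fin (c + 3) → Set H.V) → Prop}
    (hInv : IsColInvariant G H (c + 3) Inv)
    {s : MirrorState c G H F} (hs : MirrorReachable G H F c Inv s) :
    Inv s.g s.h ∧ ∀ i A B, s.α i = some A → s.β i = some B →
      s.g (liftCol i) = greenPart A ∧ s.h (liftCol i) = greenPart B ∧ SameNonGreen A B := by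
  induction hs with
  | refl => exact ⟨hInv.1, fun i A B h => by simp [mirrorInit] at h⟩
  | tail _ hstep ih =>
    cases hstep with
    | fromG t x Y hi =>
      refine ⟨hi, fun i A B hA hB => ?_⟩
      by_cases e : i = t
      · subst e
        simp only [Function.update_self, Option.some.injEq] at hA hB ⊢
        subst hA hB
        exact ⟨rfl, rfl, mirrorElt_sameNonGreen _ _⟩
      · have e' := liftCol_injective.ne e
        simp only [Function.update_of_ne e, Function.update_of_ne e'] at hA hB ⊢
        exact ih.2 i A B hA hB
    | fromH t y X hi =>
      refine ⟨hi, fun i A B hA hB => ?_⟩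
      by_cases e : i = t
      · subst e
        simp only [Function.update_self, Option.some.injEq] at hA hB ⊢
        subst hA hB
        exact ⟨rfl, rfl, (mirrorElt_sameNonGreen _ _).flip⟩
      · have e' := liftCol_injective.ne e
        simp only [Function.update_of_ne e, Function.update_of_ne e'] at hA hB ⊢
        exact ih.2 i A B hA hB

theorem mirror_nonGreen_eq {σ : Type} (G H F : BinStruct σ) (c : ℕ)
    (Inv : (Fin (c + 3) → Set G.V) → (Fin (c + 3) → Set H.V) → Prop)
    (hInv : IsColInvariant G H (c + 3) Inv)
    (s : MirrorState c G H F) (hs : MirrorReachable G H F c Inv s)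
    (t : RATerm c) (X : Set (RbAtom G.V F.V)) (Y : Set (RbAtom H.V F.V))
    (hX : t.evalo (rbOps G F) s.α = some X) (hY : t.evalo (rbOps H F) s.β = some Y) :
    (RbAtom.id ∈ X ↔ RbAtom.id ∈ Y) ∧ (RbAtom.black ∈ X ↔ RbAtom.black ∈ Y) ∧
    (RbAtom.white ∈ X ↔ RbAtom.white ∈ Y) ∧ (RbAtom.yellow ∈ X ↔ RbAtom.yellow ∈ Y) ∧
    (∀ j j' : F.V, RbAtom.red j j' ∈ X ↔ RbAtom.red j j' ∈ Y) := by
  obtain ⟨h0, hv⟩ := mirror_invariant hInv hs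
  have key : Agree (PointRel Inv s.g s.h) X Y := by
    refine term_agree (pointRel_forth hInv h0) (pointRel_back hInv h0) ?_ t X Y hX hY
    intro i A B hA hB a a' h
    obtain ⟨h1, h2, h3⟩ := hv i A B hA hB
    cases h with
    | green k k' hk =>
      obtain ⟨g, h, hgh, hg, hh, m, -, gm, hm⟩ := hk
      have := palette_singletons (hInv.2.1 _ _ hgh) gm hm (liftCol i)
      rw [hg, hh, h1, h2] at this
      exact this
    | id => exact h3 _ _ .id
    | black => exact h3 _ _ .black
    | white => exact h3 _ _ .white
    | yellow => exact h3 _ _ .yellow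
    | red j j' => exact h3 _ _ (.red j j')
  exact ⟨key _ _ .id, key _ _ .black, key _ _ .white, key _ _ .yellow,
    fun j j' => key _ _ (.red j j')⟩
end
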